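/- arXiv:1311.3409 — 3 statements merged into one kernel-verified Lean document; each statement's English description precedes it below -/
import Mathlib

section
/- Let X_1 and X_2 be independent positive random variables such that, for i = 1, 2, P(X_i > x) = (1 + o(1))·C_i·x^{α_i}·exp(−L_i·x^{p_i}) as x → ∞, where L_i, C_i, p_i are positive constants and α_1, α_2 ∈ ℝ. Set A = ((p_1·L_1)/(p_2·L_2))^{1/(p_1 + p_2)}. Then, as x → ∞, P(X_1·X_2 > x) = (1 + o(1)) · (2π·p_2·L_2/(p_1 + p_2))^{1/2} · C_1·C_2 · A^{p_2/2 + α_2 − α_1} · x^{(2·p_2·α_1 + 2·p_1·α_2 + p_1·p_2)/(2·(p_1 + p_2))} · exp( −(L_1·A^{−p_1} + L_2·A^{p_2})·x^{p_1·p_2/(p_1 + p_2)} ). -/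
open MeasureTheory ProbabilityTheory Filter

/-!
Passing to logarithms `U = log X₁`, `V = log X₂`, `ξ = log x` turns the product into a sum, and the
tails into doubly exponential ones, `P(U > u) ~ C₁ exp(α₁ u - L₁ e^{p₁ u})` and likewise for `V`.

The tail of `U + V` is monotone in the tail of `V` (`prod_sumGt_mono`). Hence, on the event that
both variables exceed a large level `m`, the law of `V` may be replaced, up to a factor `1 ± ε`, by
a measure whose tail is exactly the model tail, and which therefore has the explicit density
`modelDensity`. On the complement of this event one variable exceeds `ξ - m`, which is negligible,
as `p₁ p₂ / (p₁ + p₂)` is smaller than both `p₁` and `p₂`. This is `sum_tail_sandwich` together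
with `tendsto_modelTail_div_peak`.

What remains is the integral of `modelDensity v * P(U > ξ - v)` over `v`. Centred at the saddle
point `v₀ = log A + p₁ ξ / (p₁ + p₂)`, the exponent is `-K λ (1/p₁ + 1/p₂) - K λ phase(v - v₀)`
with `λ = e^{p₁ p₂ ξ / (p₁ + p₂)}`, plus linear terms. The phase is bounded below by a multiple of
`u²` on the whole line and is equivalent to `(p₁ + p₂) u² / 2` at `0`, so after rescaling by
`λ^{-1/2}` dominated convergence (`laplace_core`) yields a Gaussian integral.
-/

/-! ### The Laplace method -/

/-- The normalised phase: up to a factor, the dominant (doubly exponential) part of minus the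
logarithm of the integrand, as a function of the distance `u` to the saddle point, shifted to have
minimum `0` at `u = 0`. -/
noncomputable def phase (p₁ p₂ u : ℝ) : ℝ :=
  (Real.exp (-p₁ * u) - 1 + p₁ * u) / p₁ + (Real.exp (p₂ * u) - 1 - p₂ * u) / p₂

/-- The two linear terms of the phase cancel, and on either side of `0` one of the two
exponentials dominates its quadratic Taylor polynomial. -/
lemma phase_ge {p₁ p₂ : ℝ} (hp₁ : 0 < p₁) (hp₂ : 0 < p₂) (u : ℝ) :
    min p₁ p₂ / 2 * u ^ 2 ≤ phase p₁ p₂ u := by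
  unfold phase
  have e1 : 0 ≤ (Real.exp (-p₁ * u) - 1 + p₁ * u) / p₁ := by
    apply div_nonneg _ hp₁.le
    linarith [Real.add_one_le_exp (-p₁ * u)]
  have e2 : 0 ≤ (Real.exp (p₂ * u) - 1 - p₂ * u) / p₂ := by
    apply div_nonneg _ hp₂.le
    linarith [Real.add_one_le_exp (p₂ * u)]
  rcases le_total 0 u with hu | hu
  · have h := Real.quadratic_le_exp_of_nonneg (mul_nonneg hp₂.le hu)
    have : p₂ / 2 * u ^ 2 ≤ (Real.exp (p₂ * u) - 1 - p₂ * u) / p₂ := by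
      rw [le_div_iff₀ hp₂]; nlinarith
    have h3 : min p₁ p₂ / 2 * u ^ 2 ≤ p₂ / 2 * u ^ 2 := by
      gcongr; exact min_le_right _ _
    linarith
  · have h := Real.quadratic_le_exp_of_nonneg (x := -p₁ * u) (by nlinarith)
    have : p₁ / 2 * u ^ 2 ≤ (Real.exp (-p₁ * u) - 1 + p₁ * u) / p₁ := by
      rw [le_div_iff₀ hp₁]; nlinarith
    have h3 : min p₁ p₂ / 2 * u ^ 2 ≤ p₁ / 2 * u ^ 2 := by
      gcongr; exact min_le_left _ _
    linarith

lemma tendsto_exp_second_order (c : ℝ) :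
    Tendsto (fun t : ℝ => (Real.exp (c * t) - 1 - c * t) / t ^ 2) (nhdsWithin 0 {0}ᶜ)
      (nhds (c ^ 2 / 2)) := by
  have h := Real.exp_sub_sum_range_succ_isLittleO_pow 2
  have hc : Tendsto (fun t : ℝ => c * t) (nhds 0) (nhds 0) := by
    have : Continuous (fun t : ℝ => c * t) := by fun_prop
    simpa using this.tendsto 0
  have h1 := h.comp_tendsto hc
  have h2 : ((fun t : ℝ => (c * t) ^ 2)) =O[nhds 0] (fun t : ℝ => t ^ 2) := by
    simp_rw [mul_pow]
    exact (Asymptotics.isBigO_refl _ _).const_mul_left _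
  have h3 := (h1.trans_isBigO h2).tendsto_div_nhds_zero.mono_left
    (nhdsWithin_le_nhds (s := ({0}ᶜ : Set ℝ)))
  have h4 := h3.add_const (c ^ 2 / 2)
  rw [zero_add] at h4
  refine h4.congr' ?_
  filter_upwards [self_mem_nhdsWithin] with t ht
  have ht : t ≠ 0 := ht
  simp [Finset.sum_range_succ, Function.comp]
  field_simp
  ring

lemma tendsto_phase (p₁ p₂ : ℝ) (hp₁ : 0 < p₁) (hp₂ : 0 < p₂) (s : ℝ) :
    Tendsto (fun t : ℝ => phase p₁ p₂ (s * t) / t ^ 2) (nhdsWithin 0 {0}ᶜ)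
      (nhds ((p₁ + p₂) / 2 * s ^ 2)) := by
  have h1 := (tendsto_exp_second_order (-p₁ * s)).div_const p₁
  have h2 := (tendsto_exp_second_order (p₂ * s)).div_const p₂
  have h := h1.add h2
  have e : ((-p₁ * s) ^ 2 / 2 / p₁ + (p₂ * s) ^ 2 / 2 / p₂) = (p₁ + p₂) / 2 * s ^ 2 := by
    field_simp
  rw [e] at h
  refine h.congr fun t => ?_
  unfold phase
  rw [div_right_comm, div_right_comm _ (t ^ 2) p₂, ← add_div]
  ring_nf

/-- The Laplace method for the phase above, in the variable rescaled by the width `τ` of the peak: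
dominated convergence against a Gaussian. -/
lemma laplace_core {p₁ p₂ K β B C : ℝ} (hp₁ : 0 < p₁) (hp₂ : 0 < p₂) (hK : 0 < K)
    {τ : ℝ → ℝ} (hτpos : ∀ ξ, 0 < τ ξ) (hτ : Tendsto τ atTop (nhds 0))
    {g : ℝ → ℝ → ℝ} (hgm : ∀ ξ, Measurable (g ξ))
    (hgB : ∀ᶠ ξ in atTop, ∀ s, |g ξ s| ≤ B)
    (hgC : ∀ s, Tendsto (fun ξ => g ξ s) atTop (nhds C)) :
    Tendsto (fun ξ => ∫ s, g ξ s *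
        Real.exp (β * (s * τ ξ) - K * (phase p₁ p₂ (s * τ ξ) / τ ξ ^ 2))) atTop
      (nhds (C * √(2 * Real.pi / (K * (p₁ + p₂))))) := by
  have hlim : C * √(2 * Real.pi / (K * (p₁ + p₂))) =
      ∫ s, C * Real.exp (-(K * (p₁ + p₂) / 2) * s ^ 2) := by
    rw [integral_const_mul, integral_gaussian]
    congr 2
    field_simp
  rw [hlim]
  set c := K * (min p₁ p₂ / 2) with hc
  have hcpos : 0 < c := by have := lt_min hp₁ hp₂; positivity
  have hτ' : Tendsto τ atTop (nhdsWithin 0 {0}ᶜ) :=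
    tendsto_nhdsWithin_iff.2 ⟨hτ, Eventually.of_forall fun ξ => (hτpos ξ).ne'⟩
  refine tendsto_integral_filter_of_dominated_convergence
    (fun s => B * Real.exp (β ^ 2 / (2 * c)) * Real.exp (-(c / 2) * s ^ 2)) ?_ ?_ ?_ ?_
  · refine Eventually.of_forall fun ξ => ?_
    refine ((hgm ξ).mul ?_).aestronglyMeasurable
    unfold phase
    fun_prop
  · filter_upwards [hgB, hτ.eventually (gt_mem_nhds one_pos)] with ξ hB h1
    refine Eventually.of_forall fun s => ?_
    have hB0 : 0 ≤ B := (abs_nonneg _).trans (hB s)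
    rw [norm_mul, Real.norm_eq_abs, Real.norm_eq_abs, Real.abs_exp, mul_assoc, ← Real.exp_add]
    refine mul_le_mul (hB s) (Real.exp_le_exp.2 ?_) (Real.exp_pos _).le hB0
    have h0 := hτpos ξ
    have e1 : c * s ^ 2 ≤ K * (phase p₁ p₂ (s * τ ξ) / τ ξ ^ 2) := by
      rw [hc, mul_assoc]
      gcongr
      rw [le_div_iff₀ (by positivity)]
      have := phase_ge hp₁ hp₂ (s * τ ξ)
      rw [mul_pow] at this
      linarith
    have e2 : β * (s * τ ξ) ≤ |β| * |s| := by
      calc β * (s * τ ξ) ≤ |β * (s * τ ξ)| := le_abs_self _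
        _ = |β| * |s| * τ ξ := by rw [abs_mul, abs_mul, abs_of_pos h0, mul_assoc]
        _ ≤ |β| * |s| * 1 := by gcongr
        _ = _ := mul_one _
    have e3 : |β| * |s| ≤ β ^ 2 / (2 * c) + c / 2 * s ^ 2 := by
      rw [← sq_abs β, ← sq_abs s, ← sub_nonneg]
      have : |β| ^ 2 / (2 * c) + c / 2 * |s| ^ 2 - |β| * |s| = (|β| - c * |s|) ^ 2 / (2 * c) := by
        field_simp
        ring
      rw [this]; positivity
    linarith
  · exact (integrable_exp_neg_mul_sq (by positivity)).const_mul _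
  · refine Eventually.of_forall fun s => (hgC s).mul ?_
    refine (Real.continuous_exp.tendsto _).comp ?_
    have t1 : Tendsto (fun ξ => β * (s * τ ξ)) atTop (nhds (β * (s * 0))) :=
      (hτ.const_mul s).const_mul β
    have t2 := ((tendsto_phase p₁ p₂ hp₁ hp₂ s).comp hτ').const_mul K
    have e : -(K * (p₁ + p₂) / 2) * s ^ 2 = β * (s * 0) - K * ((p₁ + p₂) / 2 * s ^ 2) := by ring
    rw [e]
    exact t1.sub t2

/-! ### Model tails and comparison of laws -/

/-- A doubly exponential decay of larger exponent beats one of smaller exponent. -/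
lemma tendsto_exp_exp_zero {p q c κ a b : ℝ} (hqp : q < p) (hp : 0 < p) (hc : 0 < c) :
    Tendsto (fun ξ : ℝ => Real.exp (a * ξ + b + κ * Real.exp (q * ξ) - c * Real.exp (p * ξ)))
      atTop (nhds 0) := by
  refine Real.tendsto_exp_atBot.comp ?_
  have hlin : ∀ r : ℝ, 0 < r → Tendsto (fun ξ : ℝ => Real.exp (-r * ξ)) atTop (nhds 0) := by
    intro r hr
    refine Real.tendsto_exp_atBot.comp ?_
    exact (tendsto_const_mul_atBot_of_neg (by linarith)).2 tendsto_id
  have h1 : Tendsto (fun ξ : ℝ => ξ * Real.exp (-p * ξ)) atTop (nhds 0) := by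
    simpa using tendsto_rpow_mul_exp_neg_mul_atTop_nhds_zero 1 p hp
  have h2 := ((h1.const_mul a).add ((hlin p hp).const_mul b)).add
    ((hlin (p - q) (by linarith)).const_mul κ)
  have h3 := h2.sub_const c
  have hexp : Tendsto (fun ξ : ℝ => Real.exp (p * ξ)) atTop atTop :=
    Real.tendsto_exp_atTop.comp ((tendsto_const_mul_atTop_of_pos hp).2 tendsto_id)
  have h4 := h3.neg_mul_atTop (by simpa using hc) hexp
  refine h4.congr fun ξ => ?_
  have e1 : Real.exp (-p * ξ) * Real.exp (p * ξ) = 1 := by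
    rw [← Real.exp_add]; simp
  have e2 : Real.exp (-(p - q) * ξ) * Real.exp (p * ξ) = Real.exp (q * ξ) := by
    rw [← Real.exp_add]; ring_nf
  linear_combination (a * ξ + b) * e1 + κ * e2

/-- The model tail of the logarithm of a Weibull-type variable. -/
noncomputable def modelTail (C α L p v : ℝ) : ℝ := C * Real.exp (α * v - L * Real.exp (p * v))

/-- Minus the derivative of `modelTail`; nonnegative only far to the right. -/
noncomputable def modelDensity (C α L p v : ℝ) : ℝ :=
  (p * L * Real.exp (p * v) - α) * modelTail C α L p v

lemma modelTail_pos {C : ℝ} (hC : 0 < C) (α L p v : ℝ) : 0 < modelTail C α L p v := by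
  unfold modelTail; positivity

lemma continuous_modelDensity (C α L p : ℝ) : Continuous (modelDensity C α L p) := by
  unfold modelDensity modelTail; fun_prop

lemma hasDerivAt_modelTail (C α L p v : ℝ) :
    HasDerivAt (modelTail C α L p) (-modelDensity C α L p v) v := by
  have h1 : HasDerivAt (fun v : ℝ => α * v) α v := by
    simpa using (hasDerivAt_id v).const_mul α
  have h2 : HasDerivAt (fun v : ℝ => p * v) p v := by
    simpa using (hasDerivAt_id v).const_mul p
  have h : HasDerivAt (modelTail C α L p) _ v := ((h1.sub (h2.exp.const_mul L)).exp).const_mul C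
  refine h.congr_deriv ?_
  simp only [modelDensity, modelTail, Pi.sub_apply]
  ring

lemma tendsto_modelTail {C α L p : ℝ} (hL : 0 < L) (hp : 0 < p) :
    Tendsto (modelTail C α L p) atTop (nhds 0) := by
  have h := (tendsto_exp_exp_zero (p := p) (q := 0) (c := L) (κ := 0) (a := α) (b := 0)
    hp hp hL).const_mul C
  rw [mul_zero] at h
  refine h.congr fun v => ?_
  simp [modelTail]

lemma eventually_modelDensity_nonneg {C α L p : ℝ} (hC : 0 < C) (hL : 0 < L) (hp : 0 < p) :
    ∀ᶠ m in atTop, ∀ v, m ≤ v → 0 ≤ modelDensity C α L p v := by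
  have hexp : Tendsto (fun v : ℝ => p * L * Real.exp (p * v)) atTop atTop :=
    (tendsto_const_mul_atTop_of_pos (by positivity)).2
      (Real.tendsto_exp_atTop.comp ((tendsto_const_mul_atTop_of_pos hp).2 tendsto_id))
  refine eventually_forall_ge_atTop.2 ?_
  filter_upwards [hexp.eventually_ge_atTop α] with v hv
  exact mul_nonneg (by linarith) (modelTail_pos hC α L p v).le

lemma lintegral_modelDensity {C α L p m : ℝ} (hL : 0 < L) (hp : 0 < p)
    (hm : ∀ v, m ≤ v → 0 ≤ modelDensity C α L p v) {t : ℝ} (ht : m ≤ t) :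
    ∫⁻ v in Set.Ioi t, ENNReal.ofReal (modelDensity C α L p v) =
      ENNReal.ofReal (modelTail C α L p t) := by
  have hd : ∀ x ∈ Set.Ici t, HasDerivAt (modelTail C α L p) (-modelDensity C α L p x) x :=
    fun x _ => hasDerivAt_modelTail C α L p x
  have hn : ∀ x ∈ Set.Ioi t, -modelDensity C α L p x ≤ 0 :=
    fun x hx => neg_nonpos.2 (hm x (ht.trans (le_of_lt hx)))
  have hi := (integrableOn_Ioi_deriv_of_nonpos' hd hn (tendsto_modelTail hL hp)).neg
  have he := integral_Ioi_of_hasDerivAt_of_nonpos' hd hn (tendsto_modelTail hL hp)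
  rw [integral_neg, zero_sub, neg_inj] at he
  rw [← he, ofReal_integral_eq_lintegral_ofReal]
  · simp only [Pi.neg_def, neg_neg] at hi
    exact hi
  · refine (ae_restrict_iff' measurableSet_Ioi).2 (Eventually.of_forall fun x hx => ?_)
    exact hm x (ht.trans (le_of_lt hx))

/-- The event that the sum exceeds `ξ`. -/
def sumGt (ξ : ℝ) : Set (ℝ × ℝ) := {z | ξ < z.1 + z.2}

lemma measurableSet_sumGt (ξ : ℝ) : MeasurableSet (sumGt ξ) :=
  measurableSet_lt measurable_const (measurable_fst.add measurable_snd)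

lemma mk_preimage_sumGt (ξ u : ℝ) : Prod.mk u ⁻¹' sumGt ξ = Set.Ioi (ξ - u) := by
  ext v; simp [sumGt, sub_lt_iff_lt_add']

lemma mk_preimage_sumGt' (ξ v : ℝ) : (fun u => (u, v)) ⁻¹' sumGt ξ = Set.Ioi (ξ - v) := by
  ext u; simp [sumGt, sub_lt_iff_lt_add]

/-- The tail of a sum is monotone in the tail of the second summand. -/
lemma prod_sumGt_mono {μ ν ρ : Measure ℝ} [SFinite ν] [SFinite ρ]
    (h : ∀ t, ν (Set.Ioi t) ≤ ρ (Set.Ioi t)) (ξ : ℝ) :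
    (μ.prod ν) (sumGt ξ) ≤ (μ.prod ρ) (sumGt ξ) := by
  rw [Measure.prod_apply (measurableSet_sumGt ξ), Measure.prod_apply (measurableSet_sumGt ξ)]
  refine lintegral_mono fun u => ?_
  rw [mk_preimage_sumGt]
  exact h _

/-- The measure on `(m, ∞)` with density the positive part of `modelDensity`. Where this density
is nonnegative, the tails of the measure are given by `modelTail`. -/
noncomputable def modelMeasure (C α L p m : ℝ) : Measure ℝ :=
  (volume.restrict (Set.Ioi m)).withDensity fun v => ENNReal.ofReal (modelDensity C α L p v)

instance (C α L p m : ℝ) : SFinite (modelMeasure C α L p m) := by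
  unfold modelMeasure; infer_instance

lemma modelMeasure_Ioi {C α L p m : ℝ} (hL : 0 < L) (hp : 0 < p)
    (hm : ∀ v, m ≤ v → 0 ≤ modelDensity C α L p v) (t : ℝ) :
    modelMeasure C α L p m (Set.Ioi t) = ENNReal.ofReal (modelTail C α L p (max t m)) := by
  rw [modelMeasure, withDensity_apply _ measurableSet_Ioi,
    Measure.restrict_restrict measurableSet_Ioi, Set.Ioi_inter_Ioi,
    lintegral_modelDensity hL hp hm (le_max_right t m)]

lemma restrict_Ioi_Ioi (ν : Measure ℝ) (m t : ℝ) :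
    (ν.restrict (Set.Ioi m)) (Set.Ioi t) = ν (Set.Ioi (max t m)) := by
  rw [Measure.restrict_apply measurableSet_Ioi, Set.Ioi_inter_Ioi]

/-- The main contribution to the tail of the sum: `F` is the tail of the first variable, the
second variable `v` has the model density, and both `v` and the threshold `ξ - v` of the first
variable are at least `m`. -/
noncomputable def windowIntegral (F : ℝ → ℝ) (C α L p m ξ : ℝ) : ℝ :=
  ∫ v in Set.Ioc m (ξ - m), modelDensity C α L p v * F (ξ - v)

lemma measurable_real_Ioi (μ : Measure ℝ) [IsFiniteMeasure μ] :
    Measurable fun t => μ.real (Set.Ioi t) := by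
  refine Antitone.measurable fun s t hst => ?_
  exact measureReal_mono (Set.Ioi_subset_Ioi hst)

/-- Fubini: with the model measure as law of the second variable, the tail of the sum is
`windowIntegral` plus the contribution of `v > ξ - m`, which is at most one model tail. -/
lemma modelMeasure_prod {μ : Measure ℝ} [IsProbabilityMeasure μ] {C α L p m ξ : ℝ}
    (hL : 0 < L) (hp : 0 < p)
    (hm : ∀ v, m ≤ v → 0 ≤ modelDensity C α L p v) (hξ : m ≤ ξ - m) :
    ENNReal.ofReal (windowIntegral (fun t => μ.real (Set.Ioi t)) C α L p m ξ) ≤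
      ((μ.restrict (Set.Ioi m)).prod (modelMeasure C α L p m)) (sumGt ξ) ∧
    ((μ.restrict (Set.Ioi m)).prod (modelMeasure C α L p m)) (sumGt ξ) ≤
      ENNReal.ofReal (windowIntegral (fun t => μ.real (Set.Ioi t)) C α L p m ξ) +
        ENNReal.ofReal (modelTail C α L p (ξ - m)) := by
  have hanti : Antitone fun t => μ (Set.Ioi t) :=
    fun s t hst => measure_mono (Set.Ioi_subset_Ioi hst)
  have hmeas : Measurable fun v : ℝ => μ (Set.Ioi (max (ξ - v) m)) :=
    hanti.measurable.comp (by fun_prop)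
  have hdm : Measurable fun v => ENNReal.ofReal (modelDensity C α L p v) :=
    (continuous_modelDensity C α L p).measurable.ennreal_ofReal
  have hT : ((μ.restrict (Set.Ioi m)).prod (modelMeasure C α L p m)) (sumGt ξ) =
      ∫⁻ v in Set.Ioi m,
        ENNReal.ofReal (modelDensity C α L p v) * μ (Set.Ioi (max (ξ - v) m)) := by
    rw [Measure.prod_apply_symm (measurableSet_sumGt ξ)]
    simp_rw [mk_preimage_sumGt', restrict_Ioi_Ioi]
    rw [modelMeasure, lintegral_withDensity_eq_lintegral_mul _ hdm hmeas]
    rfl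
  have hsplit : ∫⁻ v in Set.Ioi m,
        ENNReal.ofReal (modelDensity C α L p v) * μ (Set.Ioi (max (ξ - v) m)) =
      (∫⁻ v in Set.Ioc m (ξ - m),
        ENNReal.ofReal (modelDensity C α L p v) * μ (Set.Ioi (max (ξ - v) m))) +
      ∫⁻ v in Set.Ioi (ξ - m),
        ENNReal.ofReal (modelDensity C α L p v) * μ (Set.Ioi (max (ξ - v) m)) := by
    rw [← Set.Ioc_union_Ioi_eq_Ioi hξ, lintegral_union measurableSet_Ioi]
    exact Set.Ioc_disjoint_Ioi le_rfl
  have hW : ∫⁻ v in Set.Ioc m (ξ - m),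
        ENNReal.ofReal (modelDensity C α L p v) * μ (Set.Ioi (max (ξ - v) m)) =
      ENNReal.ofReal (windowIntegral (fun t => μ.real (Set.Ioi t)) C α L p m ξ) := by
    rw [windowIntegral, ofReal_integral_eq_lintegral_ofReal]
    · refine setLIntegral_congr_fun measurableSet_Ioc fun v hv => ?_
      have : max (ξ - v) m = ξ - v := max_eq_left (by linarith [hv.2])
      simp only [this]
      rw [ENNReal.ofReal_mul (hm v hv.1.le), measureReal_def,
        ENNReal.ofReal_toReal (measure_ne_top _ _)]
    · have h1 : IntegrableOn (modelDensity C α L p) (Set.Ioc m (ξ - m)) :=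
        ((continuous_modelDensity C α L p).integrableOn_Icc).mono_set Set.Ioc_subset_Icc_self
      refine Integrable.mul_bdd (c := 1) h1
        ((measurable_real_Ioi μ).comp (by fun_prop)).aestronglyMeasurable ?_
      refine Eventually.of_forall fun v => ?_
      rw [Real.norm_of_nonneg measureReal_nonneg]
      exact measureReal_le_one
    · refine (ae_restrict_iff' measurableSet_Ioc).2 (Eventually.of_forall fun v hv => ?_)
      exact mul_nonneg (hm v hv.1.le) measureReal_nonneg
  rw [hT, hsplit, hW]
  refine ⟨le_self_add, ?_⟩
  gcongr
  rw [← lintegral_modelDensity hL hp hm hξ]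
  refine lintegral_mono fun v => ?_
  exact mul_le_of_le_one_right' prob_le_one

/-- If the tail of `ν` is within a factor `1 ± ε` of the model tail beyond `m`, then `ν` may be
replaced by the model measure on the event that both variables exceed `m`. On the complement, one
of the variables exceeds `ξ - m`. -/
lemma sum_tail_sandwich {μ ν : Measure ℝ} [IsProbabilityMeasure μ] [IsProbabilityMeasure ν]
    {C α L p m ξ ε : ℝ} (hC : 0 < C) (hL : 0 < L) (hp : 0 < p) (hε : 0 < ε) (hε1 : ε < 1)
    (hm : ∀ v, m ≤ v → 0 ≤ modelDensity C α L p v) (hξ : m ≤ ξ - m)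
    (hlow : ∀ t, m ≤ t → (1 - ε) * modelTail C α L p t ≤ ν.real (Set.Ioi t))
    (hupp : ∀ t, m ≤ t → ν.real (Set.Ioi t) ≤ (1 + ε) * modelTail C α L p t) :
    (1 - ε) * windowIntegral (fun t => μ.real (Set.Ioi t)) C α L p m ξ ≤
      (μ.prod ν).real (sumGt ξ) ∧
    (μ.prod ν).real (sumGt ξ) ≤
      (1 + ε) * (windowIntegral (fun t => μ.real (Set.Ioi t)) C α L p m ξ +
        modelTail C α L p (ξ - m)) + μ.real (Set.Ioi (ξ - m)) + ν.real (Set.Ioi (ξ - m)) := by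
  obtain ⟨h1, h2⟩ := modelMeasure_prod (μ := μ) hL hp hm hξ
  set S := windowIntegral (fun t => μ.real (Set.Ioi t)) C α L p m ξ with hS
  set μ' := μ.restrict (Set.Ioi m) with hμ'
  set ν' := ν.restrict (Set.Ioi m) with hν'
  set ρ := modelMeasure C α L p m with hρ
  have hS0 : 0 ≤ S := by
    refine setIntegral_nonneg measurableSet_Ioc fun v hv => ?_
    exact mul_nonneg (hm v hv.1.le) measureReal_nonneg
  have hG0 := (modelTail_pos hC α L p (ξ - m)).le
  have hmain : (μ'.prod ν') (sumGt ξ) ≤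
      ENNReal.ofReal ((1 + ε) * (S + modelTail C α L p (ξ - m))) := by
    have := prod_sumGt_mono (μ := μ') (ν := ν') (ρ := ENNReal.ofReal (1 + ε) • ρ) (fun t => by
      rw [hν', restrict_Ioi_Ioi, Measure.smul_apply, hρ, modelMeasure_Ioi hL hp hm, smul_eq_mul,
        ← ENNReal.ofReal_mul (by linarith), ← ENNReal.ofReal_toReal (measure_ne_top ν _)]
      exact ENNReal.ofReal_le_ofReal (hupp _ (le_max_right _ _))) ξ
    rw [Measure.prod_smul_right, Measure.smul_apply, smul_eq_mul] at this
    refine this.trans ?_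
    rw [ENNReal.ofReal_mul (by linarith), ENNReal.ofReal_add hS0 hG0]
    gcongr
  have hmain' : ENNReal.ofReal ((1 - ε) * S) ≤ (μ'.prod ν') (sumGt ξ) := by
    have := prod_sumGt_mono (μ := μ') (ν := ENNReal.ofReal (1 - ε) • ρ) (ρ := ν') (fun t => by
      rw [hν', restrict_Ioi_Ioi, Measure.smul_apply, hρ, modelMeasure_Ioi hL hp hm, smul_eq_mul,
        ← ENNReal.ofReal_mul (by linarith), ← ENNReal.ofReal_toReal (measure_ne_top ν _)]
      exact ENNReal.ofReal_le_ofReal (hlow _ (le_max_right _ _))) ξ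
    rw [Measure.prod_smul_right, Measure.smul_apply, smul_eq_mul] at this
    refine le_trans ?_ this
    rw [ENNReal.ofReal_mul (by linarith)]
    gcongr
  have hrest : μ'.prod ν' = (μ.prod ν).restrict (Set.Ioi m ×ˢ Set.Ioi m) :=
    Measure.prod_restrict _ _
  rw [hrest, Measure.restrict_apply (measurableSet_sumGt ξ)] at hmain hmain'
  constructor
  · rw [← ENNReal.ofReal_le_ofReal_iff measureReal_nonneg, measureReal_def,
      ENNReal.ofReal_toReal (measure_ne_top _ _)]
    exact hmain'.trans (measure_mono Set.inter_subset_left)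
  · have hsub : sumGt ξ ⊆ (sumGt ξ ∩ Set.Ioi m ×ˢ Set.Ioi m) ∪
        (Set.Ioi (ξ - m) ×ˢ Set.univ) ∪ (Set.univ ×ˢ Set.Ioi (ξ - m)) := by
      rintro ⟨u, v⟩ huv
      have huv' : ξ < u + v := huv
      by_cases hu : m < u
      · by_cases hv : m < v
        · exact Or.inl (Or.inl ⟨huv, hu, hv⟩)
        · refine Or.inl (Or.inr ⟨?_, trivial⟩)
          simp only [Set.mem_Ioi]; linarith
      · refine Or.inr ⟨trivial, ?_⟩
        simp only [Set.mem_Ioi]; linarith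
    have hprod1 : (μ.prod ν).real (Set.Ioi (ξ - m) ×ˢ Set.univ) = μ.real (Set.Ioi (ξ - m)) := by
      simp [measureReal_def]
    have hprod2 : (μ.prod ν).real (Set.univ ×ˢ Set.Ioi (ξ - m)) = ν.real (Set.Ioi (ξ - m)) := by
      simp [measureReal_def]
    have e := measureReal_mono (μ := μ.prod ν) hsub
    have e1 := measureReal_union_le (μ := μ.prod ν) ((sumGt ξ ∩ Set.Ioi m ×ˢ Set.Ioi m) ∪
        (Set.Ioi (ξ - m) ×ˢ Set.univ)) (Set.univ ×ˢ Set.Ioi (ξ - m))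
    have e2 := measureReal_union_le (μ := μ.prod ν) (sumGt ξ ∩ Set.Ioi m ×ˢ Set.Ioi m)
        (Set.Ioi (ξ - m) ×ˢ Set.univ)
    have e3 : (μ.prod ν).real (sumGt ξ ∩ Set.Ioi m ×ˢ Set.Ioi m) ≤
        (1 + ε) * (S + modelTail C α L p (ξ - m)) := by
      rw [measureReal_def]
      exact ENNReal.toReal_le_of_le_ofReal (by positivity) hmain
    linarith

/-! ### The integral around the saddle point -/

/-- Position of the saddle point for the second variable. -/
noncomputable def saddle (a p₁ p₂ ξ : ℝ) : ℝ := a + p₁ / (p₁ + p₂) * ξ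

/-- Width of the peak around the saddle point. -/
noncomputable def width (p₁ p₂ ξ : ℝ) : ℝ := Real.exp (-(p₁ * p₂ / (p₁ + p₂) / 2) * ξ)

/-- The value of the integrand at the saddle point times the width of the peak. -/
noncomputable def peak (a K C L p₁ p₂ α₁ α₂ ξ : ℝ) : ℝ :=
  width p₁ p₂ ξ * (C * (p₂ * L) * Real.exp ((p₂ + α₂) * saddle a p₁ p₂ ξ +
    α₁ * (ξ - saddle a p₁ p₂ ξ) - Real.exp (p₁ * p₂ / (p₁ + p₂) * ξ) * (K * (1 / p₁ + 1 / p₂))))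

lemma peak_pos {C L p₂ : ℝ} (hC : 0 < C) (hL : 0 < L) (hp₂ : 0 < p₂) (a K p₁ α₁ α₂ ξ : ℝ) :
    0 < peak a K C L p₁ p₂ α₁ α₂ ξ := by
  unfold peak width; positivity

/-- The factorisation of the integrand around the saddle point. The two expressions for `K` say
that the exponent is stationary there. -/
lemma integrand_factor {a K C₂ L₁ L₂ p₁ p₂ α₁ α₂ : ℝ} (hp₁ : 0 < p₁) (hp₂ : 0 < p₂)
    (hL₂ : 0 < L₂)
    (hK₁ : K = p₁ * L₁ * Real.exp (-p₁ * a)) (hK₂ : K = p₂ * L₂ * Real.exp (p₂ * a))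
    (F : ℝ → ℝ) (ξ s : ℝ) :
    width p₁ p₂ ξ * (modelDensity C₂ α₂ L₂ p₂ (saddle a p₁ p₂ ξ + s * width p₁ p₂ ξ) *
        F (ξ - (saddle a p₁ p₂ ξ + s * width p₁ p₂ ξ))) =
      peak a K C₂ L₂ p₁ p₂ α₁ α₂ ξ *
      ((1 - α₂ / (p₂ * L₂) * Real.exp (-p₂ * (saddle a p₁ p₂ ξ + s * width p₁ p₂ ξ))) *
        (F (ξ - (saddle a p₁ p₂ ξ + s * width p₁ p₂ ξ)) /
          modelTail 1 α₁ L₁ p₁ (ξ - (saddle a p₁ p₂ ξ + s * width p₁ p₂ ξ))) *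
        Real.exp ((α₂ + p₂ - α₁) * (s * width p₁ p₂ ξ) -
          K * (phase p₁ p₂ (s * width p₁ p₂ ξ) / width p₁ p₂ ξ ^ 2))) := by
  have hP : p₁ + p₂ ≠ 0 := by positivity
  have hτ : width p₁ p₂ ξ ^ 2 = (Real.exp (p₁ * p₂ / (p₁ + p₂) * ξ))⁻¹ := by
    rw [width, ← Real.exp_nat_mul, ← Real.exp_neg]
    congr 1; push_cast; ring
  rw [hτ, div_inv_eq_mul]
  set τ := width p₁ p₂ ξ with hτd
  set w := s * τ with hw
  set v₀ := saddle a p₁ p₂ ξ with hv₀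
  set lam := Real.exp (p₁ * p₂ / (p₁ + p₂) * ξ) with hlam
  have k2 : p₂ * L₂ * Real.exp (p₂ * (v₀ + w)) = K * lam * Real.exp (p₂ * w) := by
    rw [hK₂, hlam, mul_assoc (p₂ * L₂), mul_assoc (p₂ * L₂), ← Real.exp_add, ← Real.exp_add]
    congr 2
    rw [hv₀, saddle]; field_simp
  have k1 : p₁ * L₁ * Real.exp (p₁ * (ξ - (v₀ + w))) = K * lam * Real.exp (-p₁ * w) := by
    rw [hK₁, hlam, mul_assoc (p₁ * L₁), mul_assoc (p₁ * L₁), ← Real.exp_add, ← Real.exp_add]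
    congr 2
    rw [hv₀, saddle]; field_simp; ring
  have k2' : L₂ * Real.exp (p₂ * (v₀ + w)) = K * lam * Real.exp (p₂ * w) / p₂ := by
    rw [← k2]; field_simp
  have k1' : L₁ * Real.exp (p₁ * (ξ - (v₀ + w))) = K * lam * Real.exp (-p₁ * w) / p₁ := by
    rw [← k1]; field_simp
  have hexp : Real.exp (α₂ * (v₀ + w) - L₂ * Real.exp (p₂ * (v₀ + w))) * Real.exp (p₂ * (v₀ + w)) =
      Real.exp ((p₂ + α₂) * v₀ + α₁ * (ξ - v₀) - lam * (K * (1 / p₁ + 1 / p₂))) *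
      Real.exp ((α₂ + p₂ - α₁) * w - K * (phase p₁ p₂ w * lam)) /
      Real.exp (α₁ * (ξ - (v₀ + w)) - L₁ * Real.exp (p₁ * (ξ - (v₀ + w)))) := by
    rw [← Real.exp_add, ← Real.exp_add, ← Real.exp_sub]
    congr 1
    rw [k1', k2', phase]
    field_simp
    ring
  have hinv : Real.exp (p₂ * (v₀ + w)) * Real.exp (-p₂ * (v₀ + w)) = 1 := by
    rw [← Real.exp_add]; simp
  have hfac : modelDensity C₂ α₂ L₂ p₂ (v₀ + w) =
      C₂ * (p₂ * L₂) * (1 - α₂ / (p₂ * L₂) * Real.exp (-p₂ * (v₀ + w))) *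
      (Real.exp (α₂ * (v₀ + w) - L₂ * Real.exp (p₂ * (v₀ + w))) *
        Real.exp (p₂ * (v₀ + w))) := by
    have hne : α₂ / (p₂ * L₂) * (p₂ * L₂) = α₂ := div_mul_cancel₀ _ (by positivity)
    rw [modelDensity, modelTail]
    linear_combination (C₂ * Real.exp (α₂ * (v₀ + w) - L₂ * Real.exp (p₂ * (v₀ + w)))) *
      (hne + α₂ / (p₂ * L₂) * (p₂ * L₂) * hinv)
  rw [hfac, hexp, peak, modelTail, ← hv₀, ← hlam, ← hτd]
  field_simp

/-- The affine change of variables centred at the saddle point and scaled by the width. -/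
lemma windowIntegral_eq {a K C₂ L₁ L₂ p₁ p₂ α₁ α₂ m : ℝ} (hp₁ : 0 < p₁) (hp₂ : 0 < p₂)
    (hL₂ : 0 < L₂)
    (hK₁ : K = p₁ * L₁ * Real.exp (-p₁ * a)) (hK₂ : K = p₂ * L₂ * Real.exp (p₂ * a))
    (F : ℝ → ℝ) (ξ : ℝ) :
    windowIntegral F C₂ α₂ L₂ p₂ m ξ = peak a K C₂ L₂ p₁ p₂ α₁ α₂ ξ *
      ∫ s, (Set.Ioc m (ξ - m)).indicator (fun v => (1 - α₂ / (p₂ * L₂) * Real.exp (-p₂ * v)) *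
        (F (ξ - v) / modelTail 1 α₁ L₁ p₁ (ξ - v))) (saddle a p₁ p₂ ξ + s * width p₁ p₂ ξ) *
        Real.exp ((α₂ + p₂ - α₁) * (s * width p₁ p₂ ξ) -
          K * (phase p₁ p₂ (s * width p₁ p₂ ξ) / width p₁ p₂ ξ ^ 2)) := by
  have hτ : 0 < width p₁ p₂ ξ := Real.exp_pos _
  rw [windowIntegral, ← integral_indicator measurableSet_Ioc,
    ← integral_add_left_eq_self _ (saddle a p₁ p₂ ξ)]
  have h := Measure.integral_comp_mul_left (fun y => (Set.Ioc m (ξ - m)).indicator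
    (fun v => modelDensity C₂ α₂ L₂ p₂ v * F (ξ - v)) (saddle a p₁ p₂ ξ + y)) (width p₁ p₂ ξ)
  rw [abs_of_pos (inv_pos.2 hτ), smul_eq_mul, eq_inv_mul_iff_mul_eq₀ hτ.ne'] at h
  rw [← h, ← integral_const_mul, ← integral_const_mul]
  congr 1
  ext s
  rw [mul_comm (width p₁ p₂ ξ) s]
  by_cases hs : saddle a p₁ p₂ ξ + s * width p₁ p₂ ξ ∈ Set.Ioc m (ξ - m)
  · rw [Set.indicator_of_mem hs, Set.indicator_of_mem hs]
    exact integrand_factor hp₁ hp₂ hL₂ hK₁ hK₂ F ξ s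
  · rw [Set.indicator_of_notMem hs, Set.indicator_of_notMem hs]
    simp

lemma tendsto_width {p₁ p₂ : ℝ} (hp₁ : 0 < p₁) (hp₂ : 0 < p₂) :
    Tendsto (width p₁ p₂) atTop (nhds 0) := by
  have : 0 < p₁ * p₂ / (p₁ + p₂) / 2 := by positivity
  exact Real.tendsto_exp_atBot.comp ((tendsto_const_mul_atBot_of_neg (by linarith)).2 tendsto_id)

lemma tendsto_windowIntegral {a K B C₁ C₂ L₁ L₂ p₁ p₂ α₁ α₂ m : ℝ} (hp₁ : 0 < p₁) (hp₂ : 0 < p₂)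
    (hC₂ : 0 < C₂) (hL₂ : 0 < L₂)
    (hK₁ : K = p₁ * L₁ * Real.exp (-p₁ * a)) (hK₂ : K = p₂ * L₂ * Real.exp (p₂ * a))
    {F : ℝ → ℝ} (hF : Measurable F)
    (hFB : ∀ t, m ≤ t → |F t / modelTail 1 α₁ L₁ p₁ t| ≤ B)
    (hFC : Tendsto (fun t => F t / modelTail 1 α₁ L₁ p₁ t) atTop (nhds C₁)) :
    Tendsto (fun ξ => windowIntegral F C₂ α₂ L₂ p₂ m ξ / peak a K C₂ L₂ p₁ p₂ α₁ α₂ ξ) atTop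
      (nhds (C₁ * √(2 * Real.pi / (K * (p₁ + p₂))))) := by
  have hK : 0 < K := by rw [hK₂]; positivity
  have hpk : ∀ ξ, 0 < peak a K C₂ L₂ p₁ p₂ α₁ α₂ ξ := peak_pos hC₂ hL₂ hp₂ a K p₁ α₁ α₂
  have hB0 : 0 ≤ B := (abs_nonneg _).trans (hFB m le_rfl)
  have hP : 0 < p₁ + p₂ := by positivity
  -- for fixed `s`, both coordinates of the rescaled point tend to infinity
  have hv : ∀ s, Tendsto (fun ξ => saddle a p₁ p₂ ξ + s * width p₁ p₂ ξ) atTop atTop := by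
    intro s
    refine Tendsto.atTop_add ?_ ((tendsto_width hp₁ hp₂).const_mul s)
    exact tendsto_atTop_add_const_left _ _
      ((tendsto_const_mul_atTop_of_pos (by positivity)).2 tendsto_id)
  have hu : ∀ s, Tendsto (fun ξ => ξ - (saddle a p₁ p₂ ξ + s * width p₁ p₂ ξ)) atTop atTop := by
    intro s
    have h1 : Tendsto (fun ξ => -a + p₂ / (p₁ + p₂) * ξ) atTop atTop :=
      tendsto_atTop_add_const_left _ _
        ((tendsto_const_mul_atTop_of_pos (by positivity)).2 tendsto_id)
    refine (h1.atTop_add ((tendsto_width hp₁ hp₂).const_mul (-s))).congr fun ξ => ?_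
    rw [saddle]; field_simp; ring
  refine (laplace_core (β := α₂ + p₂ - α₁)
    (B := (1 + |α₂ / (p₂ * L₂)| * Real.exp (-p₂ * m)) * B) hp₁ hp₂ hK
    (τ := width p₁ p₂) (fun ξ => Real.exp_pos _) (tendsto_width hp₁ hp₂)
    (g := fun ξ s => (Set.Ioc m (ξ - m)).indicator
      (fun v => (1 - α₂ / (p₂ * L₂) * Real.exp (-p₂ * v)) *
        (F (ξ - v) / modelTail 1 α₁ L₁ p₁ (ξ - v))) (saddle a p₁ p₂ ξ + s * width p₁ p₂ ξ))
    ?_ ?_ ?_).congr fun ξ => ?_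
  · intro ξ
    have hmeas : Measurable (fun v => (1 - α₂ / (p₂ * L₂) * Real.exp (-p₂ * v)) *
        (F (ξ - v) / modelTail 1 α₁ L₁ p₁ (ξ - v))) := by
      unfold modelTail
      fun_prop
    exact (hmeas.indicator measurableSet_Ioc).comp (by fun_prop)
  · refine Eventually.of_forall fun ξ s => ?_
    by_cases hs : saddle a p₁ p₂ ξ + s * width p₁ p₂ ξ ∈ Set.Ioc m (ξ - m)
    · rw [Set.indicator_of_mem hs, abs_mul]
      refine mul_le_mul ?_ (hFB _ (by linarith [hs.2])) (abs_nonneg _) (by positivity)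
      refine (abs_sub _ _).trans ?_
      rw [abs_one, abs_mul, Real.abs_exp]
      have := hs.1
      gcongr 1 + _ * Real.exp ?_
      nlinarith
    · rw [Set.indicator_of_notMem hs, abs_zero]
      positivity
  · intro s
    have h1 : Tendsto (fun ξ => 1 - α₂ / (p₂ * L₂) *
        Real.exp (-p₂ * (saddle a p₁ p₂ ξ + s * width p₁ p₂ ξ))) atTop
        (nhds (1 - α₂ / (p₂ * L₂) * 0)) := by
      refine tendsto_const_nhds.sub (Tendsto.const_mul _ (Real.tendsto_exp_atBot.comp ?_))
      exact (tendsto_const_mul_atBot_of_neg (by linarith)).2 (hv s)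
    have h2 := h1.mul (hFC.comp (hu s))
    rw [mul_zero, sub_zero, one_mul] at h2
    refine h2.congr' ?_
    filter_upwards [(hv s).eventually_gt_atTop m, (hu s).eventually_ge_atTop m] with ξ e1 e2
    have hs : saddle a p₁ p₂ ξ + s * width p₁ p₂ ξ ∈ Set.Ioc m (ξ - m) := ⟨e1, by linarith⟩
    rw [Set.indicator_of_mem hs]
    rfl
  · rw [windowIntegral_eq (α₁ := α₁) hp₁ hp₂ hL₂ hK₁ hK₂, mul_div_cancel_left₀ _ (hpk ξ).ne']

/-! ### The tail of the sum, and return to the product -/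

/-- A single tail at `ξ - m` is negligible: its exponent `p` exceeds the exponent
`p₁ * p₂ / (p₁ + p₂)` of the sum. -/
lemma tendsto_modelTail_div_peak {a K C₂ L₂ p₁ p₂ α₁ α₂ C α L p m : ℝ}
    (hL : 0 < L) (hp : 0 < p) (hq : p₁ * p₂ / (p₁ + p₂) < p) :
    Tendsto (fun ξ => modelTail C α L p (ξ - m) / peak a K C₂ L₂ p₁ p₂ α₁ α₂ ξ) atTop
      (nhds 0) := by
  have h := (tendsto_exp_exp_zero (κ := K * (1 / p₁ + 1 / p₂)) (c := L * Real.exp (-p * m))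
    (a := α + p₁ * p₂ / (p₁ + p₂) / 2 - (p₂ + α₂) * (p₁ / (p₁ + p₂)) -
      α₁ * (1 - p₁ / (p₁ + p₂)))
    (b := -α * m - (p₂ + α₂) * a + α₁ * a) hq hp (by positivity)).const_mul (C / (C₂ * (p₂ * L₂)))
  rw [mul_zero] at h
  refine h.congr fun ξ => ?_
  rw [peak, width, modelTail, mul_left_comm (Real.exp _), ← Real.exp_add, mul_div_mul_comm, ← Real.exp_sub]
  congr 2
  have e : Real.exp (p * (ξ - m)) = Real.exp (-p * m) * Real.exp (p * ξ) := by
    rw [← Real.exp_add]; ring_nf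
  rw [e, saddle]
  ring

/-- The additive form of the result: the tail of the sum of two independent variables with
doubly exponential tails. -/
lemma tendsto_sum_tail {μ ν : Measure ℝ} [IsProbabilityMeasure μ] [IsProbabilityMeasure ν]
    {a K C₁ C₂ L₁ L₂ p₁ p₂ α₁ α₂ : ℝ} (hp₁ : 0 < p₁) (hp₂ : 0 < p₂)
    (hC₁ : 0 < C₁) (hC₂ : 0 < C₂) (hL₁ : 0 < L₁) (hL₂ : 0 < L₂)
    (hK₁ : K = p₁ * L₁ * Real.exp (-p₁ * a)) (hK₂ : K = p₂ * L₂ * Real.exp (p₂ * a))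
    (hμ : Tendsto (fun t => μ.real (Set.Ioi t) / modelTail 1 α₁ L₁ p₁ t) atTop (nhds C₁))
    (hν : Tendsto (fun t => ν.real (Set.Ioi t) / modelTail C₂ α₂ L₂ p₂ t) atTop (nhds 1)) :
    Tendsto (fun ξ => (μ.prod ν).real (sumGt ξ) / peak a K C₂ L₂ p₁ p₂ α₁ α₂ ξ) atTop
      (nhds (C₁ * √(2 * Real.pi / (K * (p₁ + p₂))))) := by
  have hK : 0 < K := by rw [hK₂]; positivity
  set D := peak a K C₂ L₂ p₁ p₂ α₁ α₂ with hD
  have hDpos : ∀ ξ, 0 < D ξ := peak_pos hC₂ hL₂ hp₂ a K p₁ α₁ α₂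
  set l := C₁ * √(2 * Real.pi / (K * (p₁ + p₂))) with hl
  have hlpos : 0 < l := by
    have : 0 < 2 * Real.pi / (K * (p₁ + p₂)) := by positivity
    have := Real.sqrt_pos.2 this
    positivity
  have hq₁ : p₁ * p₂ / (p₁ + p₂) < p₁ := by
    rw [div_lt_iff₀ (by positivity)]; nlinarith
  have hq₂ : p₁ * p₂ / (p₁ + p₂) < p₂ := by
    rw [div_lt_iff₀ (by positivity)]; nlinarith
  have key : ∀ ε : ℝ, 0 < ε → ε < 1 → ∃ lo up : ℝ → ℝ,
      Tendsto lo atTop (nhds ((1 - ε) * l)) ∧ Tendsto up atTop (nhds ((1 + ε) * l)) ∧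
      ∀ᶠ ξ in atTop, lo ξ ≤ (μ.prod ν).real (sumGt ξ) / D ξ ∧
        (μ.prod ν).real (sumGt ξ) / D ξ ≤ up ξ := by
    intro ε hε hε1
    have ev1 := eventually_forall_ge_atTop.2 (hμ.eventually (Icc_mem_nhds
      (show C₁ - 1 < C₁ by linarith) (show C₁ < C₁ + 1 by linarith)))
    have ev2 := eventually_forall_ge_atTop.2 (hν.eventually (Icc_mem_nhds
      (show 1 - ε < 1 by linarith) (show 1 < 1 + ε by linarith)))
    obtain ⟨m, hm1, hm2, hm3⟩ := (ev1.and (ev2.and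
      (eventually_modelDensity_nonneg (α := α₂) hC₂ hL₂ hp₂))).exists
    have hT : ∀ t, 0 < modelTail C₂ α₂ L₂ p₂ t := modelTail_pos hC₂ α₂ L₂ p₂
    have hS : Tendsto (fun ξ => windowIntegral (fun t => μ.real (Set.Ioi t)) C₂ α₂ L₂ p₂ m ξ /
        D ξ) atTop (nhds l) := by
      refine tendsto_windowIntegral (B := C₁ + 1) (m := m) hp₁ hp₂ hC₂ hL₂ hK₁ hK₂
        (measurable_real_Ioi μ) (fun t ht => ?_) hμ
      have := hm1 t ht
      rw [abs_of_nonneg (div_nonneg measureReal_nonneg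
        (modelTail_pos one_pos α₁ L₁ p₁ t).le)]
      exact this.2
    have hsub : Tendsto (fun ξ : ℝ => ξ - m) atTop atTop :=
      tendsto_atTop_add_const_right _ (-m) tendsto_id
    have n2 : Tendsto (fun ξ => modelTail C₂ α₂ L₂ p₂ (ξ - m) / D ξ) atTop (nhds 0) :=
      tendsto_modelTail_div_peak hL₂ hp₂ hq₂
    have n1 : Tendsto (fun ξ => modelTail 1 α₁ L₁ p₁ (ξ - m) / D ξ) atTop (nhds 0) :=
      tendsto_modelTail_div_peak hL₁ hp₁ hq₁
    have t1 : Tendsto (fun ξ => μ.real (Set.Ioi (ξ - m)) / D ξ) atTop (nhds 0) := by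
      have := (hμ.comp hsub).mul n1
      rw [mul_zero] at this
      refine this.congr fun ξ => ?_
      have := (modelTail_pos one_pos α₁ L₁ p₁ (ξ - m)).ne'
      simp only [Function.comp]
      field_simp
    have t2 : Tendsto (fun ξ => ν.real (Set.Ioi (ξ - m)) / D ξ) atTop (nhds 0) := by
      have := (hν.comp hsub).mul n2
      rw [mul_zero] at this
      refine this.congr fun ξ => ?_
      have := (hT (ξ - m)).ne'
      simp only [Function.comp]
      field_simp
    refine ⟨_, fun ξ => (1 + ε) * (windowIntegral (fun t => μ.real (Set.Ioi t)) C₂ α₂ L₂ p₂ m ξ /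
        D ξ + modelTail C₂ α₂ L₂ p₂ (ξ - m) / D ξ) + μ.real (Set.Ioi (ξ - m)) / D ξ +
        ν.real (Set.Ioi (ξ - m)) / D ξ, hS.const_mul (1 - ε), ?_, ?_⟩
    · have := (((hS.add n2).const_mul (1 + ε)).add t1).add t2
      simpa using this
    · filter_upwards [hsub.eventually_ge_atTop m] with ξ hξ
      obtain ⟨b1, b2⟩ := sum_tail_sandwich (μ := μ) (ν := ν) hC₂ hL₂ hp₂ hε hε1 hm3 hξ
        (fun t ht => (le_div_iff₀ (hT t)).1 (hm2 t ht).1)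
        (fun t ht => (div_le_iff₀ (hT t)).1 (hm2 t ht).2)
      constructor
      · rw [← mul_div_assoc]
        exact div_le_div_of_nonneg_right b1 (hDpos ξ).le
      · rw [← add_div, ← mul_div_assoc, ← add_div, ← add_div]
        exact div_le_div_of_nonneg_right b2 (hDpos ξ).le
  refine tendsto_order.2 ⟨fun c hc => ?_, fun c hc => ?_⟩
  · obtain ⟨ε, hε, hε1, hcε⟩ : ∃ ε : ℝ, 0 < ε ∧ ε < 1 ∧ c < (1 - ε) * l := by
      have hcont : Tendsto (fun ε : ℝ => (1 - ε) * l) (nhdsWithin 0 (Set.Ioi 0)) (nhds l) := by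
        have : Continuous fun ε : ℝ => (1 - ε) * l := by fun_prop
        simpa using (this.tendsto 0).mono_left nhdsWithin_le_nhds
      obtain ⟨ε, h1, h2, h3⟩ := ((hcont.eventually (lt_mem_nhds hc)).and
        ((eventually_mem_nhdsWithin (s := Set.Ioi (0 : ℝ))).and
          (nhdsWithin_le_nhds (gt_mem_nhds (one_pos : (0 : ℝ) < 1))))).exists
      exact ⟨ε, h2, h3, h1⟩
    obtain ⟨lo, up, hlo, -, hb⟩ := key ε hε hε1
    filter_upwards [hlo.eventually (lt_mem_nhds hcε), hb] with ξ h1 h2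
    exact h1.trans_le h2.1
  · obtain ⟨ε, hε, hε1, hcε⟩ : ∃ ε : ℝ, 0 < ε ∧ ε < 1 ∧ (1 + ε) * l < c := by
      have hcont : Tendsto (fun ε : ℝ => (1 + ε) * l) (nhdsWithin 0 (Set.Ioi 0)) (nhds l) := by
        have : Continuous fun ε : ℝ => (1 + ε) * l := by fun_prop
        simpa using (this.tendsto 0).mono_left nhdsWithin_le_nhds
      obtain ⟨ε, h1, h2, h3⟩ := ((hcont.eventually (gt_mem_nhds hc)).and
        ((eventually_mem_nhdsWithin (s := Set.Ioi (0 : ℝ))).and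
          (nhdsWithin_le_nhds (gt_mem_nhds (one_pos : (0 : ℝ) < 1))))).exists
      exact ⟨ε, h2, h3, h1⟩
    obtain ⟨lo, up, -, hup, hb⟩ := key ε hε hε1
    filter_upwards [hup.eventually (gt_mem_nhds hcε), hb] with ξ h1 h2
    exact h2.2.trans_lt h1

/-- The limit constant times `peak` is the closed form of the statement at `x = exp ξ`, with
`A = exp a`. -/
lemma peak_closed_form {a K C₁ C₂ L₁ L₂ p₁ p₂ α₁ α₂ : ℝ} (hp₁ : 0 < p₁) (hp₂ : 0 < p₂)
    (hL₂ : 0 < L₂)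
    (hK₁ : K = p₁ * L₁ * Real.exp (-p₁ * a)) (hK₂ : K = p₂ * L₂ * Real.exp (p₂ * a)) (ξ : ℝ) :
    (2 * Real.pi * p₂ * L₂ / (p₁ + p₂)) ^ ((1 : ℝ) / 2) * (C₁ * C₂) *
      Real.exp a ^ (p₂ / 2 + α₂ - α₁) *
      Real.exp ξ ^ ((2 * p₂ * α₁ + 2 * p₁ * α₂ + p₁ * p₂) / (2 * (p₁ + p₂))) *
      Real.exp (-((L₁ * Real.exp a ^ (-p₁) + L₂ * Real.exp a ^ p₂) *
        Real.exp ξ ^ (p₁ * p₂ / (p₁ + p₂)))) =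
    peak a K C₂ L₂ p₁ p₂ α₁ α₂ ξ * (C₁ * √(2 * Real.pi / (K * (p₁ + p₂)))) := by
  have hs : √(2 * Real.pi / (K * (p₁ + p₂))) =
      √(2 * Real.pi * p₂ * L₂ / (p₁ + p₂)) * (Real.exp (-(p₂ * a / 2)) / (p₂ * L₂)) := by
    have e : 2 * Real.pi / (K * (p₁ + p₂)) = (2 * Real.pi * p₂ * L₂ / (p₁ + p₂)) *
        (Real.exp (-(p₂ * a / 2)) / (p₂ * L₂)) ^ 2 := by
      have e1 : Real.exp (-(p₂ * a / 2)) ^ 2 = (Real.exp (p₂ * a))⁻¹ := by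
        rw [← Real.exp_nat_mul, ← Real.exp_neg]; congr 1; push_cast; ring
      rw [div_pow, e1, hK₂]
      field_simp
    rw [e, Real.sqrt_mul (by positivity), Real.sqrt_sq (by positivity)]
  have hKs : K * (1 / p₁ + 1 / p₂) = L₁ * Real.exp (-p₁ * a) + L₂ * Real.exp (p₂ * a) := by
    have e1 : K * (1 / p₁) = L₁ * Real.exp (-p₁ * a) := by rw [hK₁]; field_simp
    have e2 : K * (1 / p₂) = L₂ * Real.exp (p₂ * a) := by rw [hK₂]; field_simp
    rw [mul_add, e1, e2]
  rw [hs, ← Real.sqrt_eq_rpow, peak, width, hKs]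
  simp only [← Real.exp_mul]
  rw [mul_comm a (-p₁), mul_comm a p₂, mul_comm ξ (p₁ * p₂ / (p₁ + p₂))]
  set R := Real.exp (p₁ * p₂ / (p₁ + p₂) * ξ) * (L₁ * Real.exp (-p₁ * a) + L₂ * Real.exp (p₂ * a))
    with hR
  have hexp : Real.exp (a * (p₂ / 2 + α₂ - α₁)) *
      Real.exp (ξ * ((2 * p₂ * α₁ + 2 * p₁ * α₂ + p₁ * p₂) / (2 * (p₁ + p₂)))) *
      Real.exp (-((L₁ * Real.exp (-p₁ * a) + L₂ * Real.exp (p₂ * a)) *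
        Real.exp (p₁ * p₂ / (p₁ + p₂) * ξ))) =
      Real.exp (-(p₁ * p₂ / (p₁ + p₂) / 2) * ξ) * Real.exp ((p₂ + α₂) * saddle a p₁ p₂ ξ +
        α₁ * (ξ - saddle a p₁ p₂ ξ) - R) * Real.exp (-(p₂ * a / 2)) := by
    rw [← Real.exp_add, ← Real.exp_add, ← Real.exp_add, ← Real.exp_add]
    congr 1
    have : (L₁ * Real.exp (-p₁ * a) + L₂ * Real.exp (p₂ * a)) *
        Real.exp (p₁ * p₂ / (p₁ + p₂) * ξ) = R := by rw [hR]; ring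
    rw [this, saddle]
    field_simp
    ring
  calc _ = √(2 * Real.pi * p₂ * L₂ / (p₁ + p₂)) * (C₁ * C₂) *
      (Real.exp (a * (p₂ / 2 + α₂ - α₁)) *
      Real.exp (ξ * ((2 * p₂ * α₁ + 2 * p₁ * α₂ + p₁ * p₂) / (2 * (p₁ + p₂)))) *
      Real.exp (-((L₁ * Real.exp (-p₁ * a) + L₂ * Real.exp (p₂ * a)) *
        Real.exp (p₁ * p₂ / (p₁ + p₂) * ξ)))) := by ring
    _ = _ := by
      rw [hexp]
      field_simp

lemma modelTail_eq (C α L p t : ℝ) :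
    modelTail C α L p t = C * Real.exp t ^ α * Real.exp (-(L * Real.exp t ^ p)) := by
  rw [modelTail, ← Real.exp_mul, ← Real.exp_mul, mul_assoc, ← Real.exp_add, mul_comm t α,
    mul_comm t p, ← sub_eq_add_neg]

lemma map_log_Ioi {Ω : Type*} [MeasureSpace Ω] {X : Ω → ℝ} (hX : Measurable X)
    (hpos : ∀ᵐ ω ∂ℙ, 0 < X ω) (t : ℝ) :
    ((ℙ : Measure Ω).map fun ω => Real.log (X ω)).real (Set.Ioi t) =
      (ℙ {ω | X ω > Real.exp t}).toReal := by
  rw [measureReal_def, Measure.map_apply (by fun_prop) measurableSet_Ioi]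
  congr 1
  refine measure_congr ?_
  filter_upwards [hpos] with ω hω
  exact propext (Real.lt_log_iff_exp_lt hω)

/-- tail asymptotics of a product of two independent random variables
with Weibull-type tails; Lemma `lem0`, equation (qTang). -/
theorem product_tail_asymptotics
    {Ω : Type*} [MeasureSpace Ω] [IsProbabilityMeasure (ℙ : Measure Ω)]
    (X₁ X₂ : Ω → ℝ) (hX₁ : Measurable X₁) (hX₂ : Measurable X₂)
    (hpos₁ : ∀ᵐ ω ∂ℙ, 0 < X₁ ω) (hpos₂ : ∀ᵐ ω ∂ℙ, 0 < X₂ ω)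
    (hindep : IndepFun X₁ X₂ ℙ)
    (C₁ C₂ L₁ L₂ p₁ p₂ : ℝ) (α₁ α₂ : ℝ)
    (hC₁ : 0 < C₁) (hC₂ : 0 < C₂) (hL₁ : 0 < L₁) (hL₂ : 0 < L₂)
    (hp₁ : 0 < p₁) (hp₂ : 0 < p₂)
    (htail₁ : Tendsto (fun x : ℝ =>
        (ℙ {ω | X₁ ω > x}).toReal / (C₁ * x ^ α₁ * Real.exp (-(L₁ * x ^ p₁))))
      atTop (nhds 1))
    (htail₂ : Tendsto (fun x : ℝ =>
        (ℙ {ω | X₂ ω > x}).toReal / (C₂ * x ^ α₂ * Real.exp (-(L₂ * x ^ p₂))))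
      atTop (nhds 1))
    (A : ℝ) (hA : A = ((p₁ * L₁) / (p₂ * L₂)) ^ (1 / (p₁ + p₂))) :
    Tendsto (fun x : ℝ =>
        (ℙ {ω | X₁ ω * X₂ ω > x}).toReal /
          ((2 * Real.pi * p₂ * L₂ / (p₁ + p₂)) ^ ((1 : ℝ) / 2) * (C₁ * C₂) *
            A ^ (p₂ / 2 + α₂ - α₁) *
            x ^ ((2 * p₂ * α₁ + 2 * p₁ * α₂ + p₁ * p₂) / (2 * (p₁ + p₂))) *
            Real.exp (-((L₁ * A ^ (-p₁) + L₂ * A ^ p₂) * x ^ (p₁ * p₂ / (p₁ + p₂))))))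
      atTop (nhds 1) := by
  have hPne : p₁ + p₂ ≠ 0 := by positivity
  have hAbase : 0 < (p₁ * L₁) / (p₂ * L₂) := by positivity
  have hApos : 0 < A := by rw [hA]; positivity
  set a := Real.log A with ha
  have hAa : A = Real.exp a := (Real.exp_log hApos).symm
  -- stationarity of the exponent at the saddle point
  have hKK : p₂ * L₂ * Real.exp (p₂ * a) = p₁ * L₁ * Real.exp (-p₁ * a) := by
    have e1 : Real.exp ((p₁ + p₂) * a) = (p₁ * L₁) / (p₂ * L₂) := by
      rw [ha, hA, Real.log_rpow hAbase, ← mul_assoc, mul_one_div, div_self hPne, one_mul,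
        Real.exp_log hAbase]
    have e2 : Real.exp (p₂ * a) = Real.exp ((p₁ + p₂) * a) * Real.exp (-p₁ * a) := by
      rw [← Real.exp_add]; ring_nf
    rw [e2, e1]
    field_simp
  set K := p₂ * L₂ * Real.exp (p₂ * a) with hK
  have hKpos : 0 < K := by positivity
  have hm₁ : Measurable fun ω => Real.log (X₁ ω) := by fun_prop
  have hm₂ : Measurable fun ω => Real.log (X₂ ω) := by fun_prop
  set μ := (ℙ : Measure Ω).map fun ω => Real.log (X₁ ω) with hμ
  set ν := (ℙ : Measure Ω).map fun ω => Real.log (X₂ ω) with hν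
  have : IsProbabilityMeasure μ := Measure.isProbabilityMeasure_map hm₁.aemeasurable
  have : IsProbabilityMeasure ν := Measure.isProbabilityMeasure_map hm₂.aemeasurable
  have htμ : Tendsto (fun t => μ.real (Set.Ioi t) / modelTail 1 α₁ L₁ p₁ t) atTop (nhds C₁) := by
    have h := (htail₁.comp Real.tendsto_exp_atTop).const_mul C₁
    rw [mul_one] at h
    refine h.congr fun t => ?_
    rw [map_log_Ioi hX₁ hpos₁, modelTail_eq]
    simp only [Function.comp]
    field_simp
  have htν : Tendsto (fun t => ν.real (Set.Ioi t) / modelTail C₂ α₂ L₂ p₂ t) atTop (nhds 1) := by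
    refine (htail₂.comp Real.tendsto_exp_atTop).congr fun t => ?_
    rw [map_log_Ioi hX₂ hpos₂, modelTail_eq]
    rfl
  have hprod : ∀ ξ, (μ.prod ν).real (sumGt ξ) =
      (ℙ {ω | X₁ ω * X₂ ω > Real.exp ξ}).toReal := by
    intro ξ
    have hind : IndepFun (fun ω => Real.log (X₁ ω)) (fun ω => Real.log (X₂ ω)) ℙ :=
      hindep.comp Real.measurable_log Real.measurable_log
    rw [← (indepFun_iff_map_prod_eq_prod_map_map hm₁.aemeasurable hm₂.aemeasurable).1 hind,
      measureReal_def, Measure.map_apply (hm₁.prodMk hm₂) (measurableSet_sumGt ξ)]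
    congr 1
    refine measure_congr ?_
    filter_upwards [hpos₁, hpos₂] with ω h1 h2
    refine propext ?_
    change ξ < Real.log (X₁ ω) + Real.log (X₂ ω) ↔ Real.exp ξ < X₁ ω * X₂ ω
    rw [← Real.log_mul h1.ne' h2.ne', Real.lt_log_iff_exp_lt (mul_pos h1 h2)]
  have hmain := tendsto_sum_tail (μ := μ) (ν := ν) hp₁ hp₂ hC₁ hC₂ hL₁ hL₂ hKK hK htμ htν
  have hlpos : 0 < C₁ * √(2 * Real.pi / (K * (p₁ + p₂))) := by
    have : 0 < 2 * Real.pi / (K * (p₁ + p₂)) := by positivity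
    have := Real.sqrt_pos.2 this
    positivity
  have hlim := (hmain.div_const (C₁ * √(2 * Real.pi / (K * (p₁ + p₂))))).comp
    Real.tendsto_log_atTop
  rw [div_self hlpos.ne'] at hlim
  refine hlim.congr' ?_
  filter_upwards [eventually_gt_atTop 0] with x hx
  simp only [Function.comp]
  rw [hprod, div_div, ← peak_closed_form hp₁ hp₂ hL₂ hKK hK, Real.exp_log hx, ← hAa]
end

section
/- Let X_1 and X_2 be independent positive random variables such that, for i = 1, 2, P(X_i > x) = (1 + o(1))·C_i·x^{α_i}·exp(−L_i·x^{p_i}) as x → ∞, where L_i, C_i, p_i are positive constants and α_1, α_2 ∈ ℝ, and set A = ((p_1·L_1)/(p_2·L_2))^{1/(p_1 + p_2)}. Suppose in addition that X_1 has a density h_1 which is bounded and ultimately decreasing (i.e., decreasing on [x_0, ∞) for some x_0), and h_1(x) = (1 + o(1))·L_1·p_1·x^{p_1 − 1}·P(X_1 > x) as x → ∞. Then the product X_1·X_2 has a density h satisfying h(x) = (1 + o(1))·L_1·p_1·A^{−p_1}·x^{p_1·p_2/(p_1 + p_2) − 1}·P(X_1·X_2 > x) as x → ∞. -/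
/-!
Write `T` for the tail of `X₁`, `μ` for the law of `X₂` and `g z = z h₁ z`. By independence
`P(X₁ X₂ > x) = ∫ T (x / y) dμ(y)`, and `X₁ X₂` has the density `h x = x⁻¹ ∫ g (x / y) dμ(y)`.
The hypothesis on `h₁` says `g z ~ L₁ p₁ z ^ p₁ T z`, so the claim is that in the second integral the
factor `(x / y) ^ p₁` may be replaced by its value `A ^ (-p₁) s`, `s = x ^ (p₁ p₂ / (p₁ + p₂))`, at
the saddle point `y = A x ^ (p₁ / (p₁ + p₂))`.

This is a concentration statement, for which only exponential rates matter. Put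
`v = (x / y) ^ p₁ / (A ^ (-p₁) s)`. The exponent `L₁ (x / y) ^ p₁ + L₂ y ^ p₂` equals
`L₁ A ^ (-p₁) s (v + (p₁ / p₂) v ^ (-p₂ / p₁))`, which is minimal at `v = 1` and exceeds its minimum
by a fixed proportion `δ` of `s` when `|v - 1| ≥ ε` (`phase_gap`). For small `η`, both `g z` and `T z`
are bounded on `(0, ∞)` by a constant times `exp (-(1 - η) L₁ z ^ p₁)`, and
`exp ((1 - η) L₂ y ^ p₂)` is `μ`-integrable (`integrable_exp_rpow`); multiplying and dividing by this
last function bounds the contributions from `|v - 1| ≥ ε` by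
`exp (-(1 - η) L₁ A ^ (-p₁) s (1 + p₁ / p₂ + δ))`. The tail of the product is at least
`exp (-(1 + η) L₁ A ^ (-p₁) s (1 + p₁ / p₂))` (`eventually_exp_le_integral_tail`), so these
contributions are negligible. On `|v - 1| < ε` the argument `x / y` is uniformly large and the
integrands are proportional up to factors `(1 ± ε) ^ 2` (`pointwise_comparison`).
-/

open MeasureTheory ProbabilityTheory Filter

/-! ### Exponential bounds from Weibull-type tails -/

lemma tendsto_weibull_correction (α p b : ℝ) (hp : 0 < p) (hb : 0 < b) :
    Tendsto (fun x : ℝ => x ^ α * Real.exp (-(b * x ^ p))) atTop (nhds 0) := by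
  have h := (tendsto_rpow_mul_exp_neg_mul_atTop_nhds_zero (α / p) b hb).comp
    (tendsto_rpow_atTop hp)
  refine h.congr' ?_
  filter_upwards [eventually_gt_atTop 0] with x hx
  simp only [Function.comp]
  rw [← Real.rpow_mul hx.le, mul_div_cancel₀ _ hp.ne', neg_mul]

/-- At the price of a factor `1 - η` in the exponent, a Weibull-type tail loses its prefactor
`C x ^ α`; this crude form is all that is needed away from the saddle point. -/
lemma eventually_le_exp_of_weibull {f : ℝ → ℝ} {C α L p η : ℝ} (hC : 0 < C) (hL : 0 < L)
    (hp : 0 < p) (hη : 0 < η)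
    (hf : Tendsto (fun x : ℝ => f x / (C * x ^ α * Real.exp (-(L * x ^ p)))) atTop (nhds 1)) :
    ∀ᶠ x in atTop, f x ≤ Real.exp (-((1 - η) * L * x ^ p)) := by
  have h0 := (tendsto_weibull_correction α p (η * L) hp (by positivity)).const_mul (2 * C)
  rw [mul_zero] at h0
  filter_upwards [hf.eventually (gt_mem_nhds (show (1:ℝ) < 2 by norm_num)),
    h0.eventually (gt_mem_nhds (show (0:ℝ) < 1 by norm_num)), eventually_gt_atTop 0]
    with x h1 h2 hx
  have hxα := Real.rpow_pos_of_pos hx α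
  rw [div_lt_iff₀ (by positivity)] at h1
  have e : Real.exp (-(L * x ^ p)) =
      Real.exp (-(η * L * x ^ p)) * Real.exp (-((1 - η) * L * x ^ p)) := by
    rw [← Real.exp_add]; ring_nf
  have hE := Real.exp_pos (-((1 - η) * L * x ^ p))
  rw [e] at h1
  nlinarith

lemma eventually_exp_le_of_weibull {f : ℝ → ℝ} {C α L p η : ℝ} (hC : 0 < C) (hL : 0 < L)
    (hp : 0 < p) (hη : 0 < η)
    (hf : Tendsto (fun x : ℝ => f x / (C * x ^ α * Real.exp (-(L * x ^ p)))) atTop (nhds 1)) :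
    ∀ᶠ x in atTop, Real.exp (-((1 + η) * L * x ^ p)) ≤ f x := by
  have h0 := (tendsto_weibull_correction (-α) p (η * L) hp (by positivity)).const_mul (2 / C)
  rw [mul_zero] at h0
  filter_upwards [hf.eventually (lt_mem_nhds (show (1/2:ℝ) < 1 by norm_num)),
    h0.eventually (gt_mem_nhds (show (0:ℝ) < 1 by norm_num)), eventually_gt_atTop 0]
    with x h1 h2 hx
  have hxα := Real.rpow_pos_of_pos hx α
  rw [lt_div_iff₀ (by positivity)] at h1
  have e : Real.exp (-((1 + η) * L * x ^ p)) =
      Real.exp (-(η * L * x ^ p)) * Real.exp (-(L * x ^ p)) := by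
    rw [← Real.exp_add]; ring_nf
  have hE := Real.exp_pos (-(L * x ^ p))
  rw [Real.rpow_neg hx.le] at h2
  have h3 : Real.exp (-(η * L * x ^ p)) ≤ 1 / 2 * (C * x ^ α) := by
    have : 2 / C * ((x ^ α)⁻¹ * Real.exp (-(η * L * x ^ p))) =
      Real.exp (-(η * L * x ^ p)) / (1 / 2 * (C * x ^ α)) := by field_simp
    rw [this, div_lt_one (by positivity)] at h2
    exact h2.le
  rw [e]
  nlinarith

/-- Local boundedness upgrades an eventual exponential bound to one on all of `(0, ∞)`. -/
lemma exists_global_exp_bound {f : ℝ → ℝ} {b p : ℝ} (hp : 0 < p) (hb : 0 < b)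
    (hloc : ∀ R : ℝ, ∃ M, ∀ z, 0 < z → z ≤ R → f z ≤ M)
    (hf : ∀ᶠ x in atTop, f x ≤ Real.exp (-(b * x ^ p))) :
    ∃ K, 0 < K ∧ ∀ z, 0 < z → f z ≤ K * Real.exp (-(b * z ^ p)) := by
  obtain ⟨R, hR⟩ := eventually_atTop.1 hf
  obtain ⟨M, hM⟩ := hloc R
  refine ⟨max 1 (M * Real.exp (b * R ^ p)), by positivity, fun z hz => ?_⟩
  have hE := Real.exp_pos (-(b * z ^ p))
  rcases le_total R z with h | h
  · calc f z ≤ 1 * Real.exp (-(b * z ^ p)) := by rw [one_mul]; exact hR z h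
      _ ≤ _ := by gcongr; exact le_max_left _ _
  · rcases le_total M 0 with hM0 | hM0
    · exact (hM z hz h).trans (hM0.trans (by positivity))
    · calc f z ≤ M * 1 := by rw [mul_one]; exact hM z hz h
        _ ≤ M * (Real.exp (b * R ^ p) * Real.exp (-(b * z ^ p))) := by
          gcongr
          rw [← Real.exp_add]
          refine Real.one_le_exp ?_
          have := Real.rpow_le_rpow hz.le h hp.le
          nlinarith
        _ = (M * Real.exp (b * R ^ p)) * Real.exp (-(b * z ^ p)) := by ring
        _ ≤ _ := by gcongr; exact le_max_right _ _

/-- A tail `exp (-(b y ^ p))` gives exponential moments of order `θ < b`: by the layer cake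
formula the integral is at most a constant plus `∫ t ^ (-b / θ) dt` near infinity. -/
lemma integrable_exp_rpow {μ : Measure ℝ} [IsProbabilityMeasure μ] (hμ : ∀ᵐ y ∂μ, 0 < y)
    {θ b p : ℝ} (hp : 0 < p) (hθ : 0 < θ) (hb : θ < b)
    (htail : ∀ᶠ x in atTop, μ.real (Set.Ioi x) ≤ Real.exp (-(b * x ^ p))) :
    Integrable (fun y => Real.exp (θ * y ^ p)) μ := by
  have hmeas : Measurable (fun y : ℝ => Real.exp (θ * y ^ p)) := by fun_prop
  refine ⟨hmeas.aestronglyMeasurable, ?_⟩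
  rw [hasFiniteIntegral_iff_ofReal (ae_of_all _ fun y => (Real.exp_pos _).le)]
  rw [lintegral_eq_lintegral_meas_lt μ (ae_of_all _ fun y => (Real.exp_pos _).le)
    hmeas.aemeasurable]
  have hr : 1 < b / θ := (one_lt_div hθ).2 hb
  have hlim : Tendsto (fun t : ℝ => (Real.log t / θ) ^ (1 / p)) atTop atTop :=
    (tendsto_rpow_atTop (by positivity)).comp (Real.tendsto_log_atTop.atTop_div_const hθ)
  obtain ⟨T, hT⟩ := eventually_atTop.1 ((hlim.eventually htail).and (eventually_gt_atTop 1))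
  have hT1 : 1 < T := (hT T le_rfl).2
  have key : ∀ t, T ≤ t → μ {y | t < Real.exp (θ * y ^ p)} ≤ ENNReal.ofReal (t ^ (-(b / θ))) := by
    intro t ht
    obtain ⟨h1, h2⟩ := hT t ht
    have hlog : 0 < Real.log t := Real.log_pos h2
    have hsub : μ {y | t < Real.exp (θ * y ^ p)} ≤ μ (Set.Ioi ((Real.log t / θ) ^ (1 / p))) := by
      refine measure_mono_ae ?_
      filter_upwards [hμ] with y hy hyt
      have hyt' : t < Real.exp (θ * y ^ p) := hyt
      change (Real.log t / θ) ^ (1 / p) < y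
      rw [one_div, Real.rpow_inv_lt_iff_of_pos (by positivity) hy.le hp, div_lt_iff₀ hθ,
        Real.log_lt_iff_lt_exp (by linarith), mul_comm]
      exact hyt'
    refine hsub.trans ?_
    rw [← ofReal_measureReal]
    refine ENNReal.ofReal_le_ofReal (h1.trans (le_of_eq ?_))
    rw [← Real.rpow_mul (by positivity), one_div, inv_mul_cancel₀ hp.ne', Real.rpow_one,
      Real.rpow_def_of_pos (by linarith)]
    congr 1
    ring
  rw [← Set.Ioc_union_Ioi_eq_Ioi (show (0:ℝ) ≤ T by linarith)]
  refine (lintegral_union_le _ _ _).trans_lt (ENNReal.add_lt_top.2 ⟨?_, ?_⟩)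
  · calc _ ≤ ∫⁻ t in Set.Ioc (0:ℝ) T, 1 := lintegral_mono fun t => prob_le_one
      _ < ⊤ := by simp
  · calc _ ≤ ∫⁻ t in Set.Ioi T, ENNReal.ofReal (t ^ (-(b / θ))) :=
          setLIntegral_mono' measurableSet_Ioi fun t ht => key t (le_of_lt ht)
      _ < ⊤ := by
          have := integrableOn_Ioi_rpow_of_lt (a := -(b / θ)) (by linarith)
            (show (0:ℝ) < T by linarith)
          exact this.lintegral_lt_top

/-! ### The exponent and its saddle point -/

/-- Quantitative strictness of `log v ≤ v - 1` away from `v = 1`, obtained from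
`log v = 2 log √v ≤ 2 (√v - 1)`, which gives `v - 1 - log v ≥ (√v - 1) ^ 2`. -/
lemma sq_div_nine_le_sub_one_sub_log {v ε : ℝ} (hv : 0 < v) (hε : 0 < ε) (hε1 : ε < 1) (h : ε ≤ |v - 1|) :
    ε ^ 2 / 9 ≤ v - 1 - Real.log v := by
  have h1 : Real.log v ≤ 2 * (√v - 1) := by
    have := Real.log_le_sub_one_of_pos (Real.sqrt_pos.2 hv)
    rw [Real.log_sqrt hv.le] at this
    linarith
  set r := √v
  have hr : 0 < r := Real.sqrt_pos.2 hv
  have hrv : v = r ^ 2 := (Real.sq_sqrt hv.le).symm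
  have h2 : (ε / 3) ≤ |r - 1| := by
    rw [hrv, show r ^ 2 - 1 = (r - 1) * (r + 1) by ring, abs_mul, abs_of_pos (by linarith : 0 < r + 1)] at h
    rcases le_total r 2 with h3 | h3
    · nlinarith [abs_nonneg (r - 1)]
    · exact le_trans (by linarith) (le_abs_self _)
  have h3 : (ε / 3) ^ 2 ≤ (r - 1) ^ 2 := by
    rw [← sq_abs (r - 1)]; gcongr
  nlinarith

/-- With `s = x ^ (p₁ p₂ / (p₁ + p₂))` and `v = (x / y) ^ p₁ / (A ^ (-p₁) s)`, the quantity
`L₂ y ^ p₂` equals `L₁ A ^ (-p₁) s (p₁ / p₂) v ^ (-p₂ / p₁)`. Hence the total exponent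
`L₁ (x / y) ^ p₁ + L₂ y ^ p₂` is `L₁ A ^ (-p₁) s` times a function of `v` alone, minimal at `v = 1`. -/
lemma phase_identity {L₁ L₂ p₁ p₂ A x y : ℝ} (hL₁ : 0 < L₁) (hL₂ : 0 < L₂)
    (hp₁ : 0 < p₁) (hp₂ : 0 < p₂) (hA : A = ((p₁ * L₁) / (p₂ * L₂)) ^ (1 / (p₁ + p₂)))
    (hx : 0 < x) (hy : 0 < y) :
    L₂ * y ^ p₂ = L₁ * A ^ (-p₁) * x ^ (p₁ * p₂ / (p₁ + p₂)) * (p₁ / p₂) *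
      Real.exp (-(p₂ / p₁) *
        Real.log ((x / y) ^ p₁ / (A ^ (-p₁) * x ^ (p₁ * p₂ / (p₁ + p₂))))) := by
  have hA0 : 0 < A := by rw [hA]; positivity
  have hlA : Real.log A = 1 / (p₁ + p₂) * (Real.log p₁ + Real.log L₁ - (Real.log p₂ + Real.log L₂)) := by
    rw [hA, Real.log_rpow (by positivity), Real.log_div (by positivity) (by positivity),
      Real.log_mul hp₁.ne' hL₁.ne', Real.log_mul hp₂.ne' hL₂.ne']
  have hAp := Real.rpow_pos_of_pos hA0 (-p₁)
  have hxs := Real.rpow_pos_of_pos hx (p₁ * p₂ / (p₁ + p₂))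
  have hxy := Real.rpow_pos_of_pos (div_pos hx hy) p₁
  have hyp := Real.rpow_pos_of_pos hy p₂
  refine Real.log_injOn_pos (Set.mem_Ioi.2 (by positivity)) (Set.mem_Ioi.2 (by positivity)) ?_
  rw [Real.log_mul hL₂.ne' hyp.ne', Real.log_mul (by positivity) (Real.exp_pos _).ne',
    Real.log_exp, Real.log_mul (by positivity) (by positivity),
    Real.log_mul (by positivity) hxs.ne', Real.log_mul hL₁.ne' hAp.ne',
    Real.log_div hp₁.ne' hp₂.ne', Real.log_div hxy.ne' (by positivity),
    Real.log_mul hAp.ne' hxs.ne', Real.log_rpow hx, Real.log_rpow hy, Real.log_rpow hA0,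
    Real.log_rpow (by positivity), Real.log_div hx.ne' hy.ne', hlA]
  field_simp
  ring

/-- Outside the window `|v - 1| < ε` the exponent `L₁ (x / y) ^ p₁ + L₂ y ^ p₂` exceeds its minimum
`L₁ A ^ (-p₁) s (1 + p₁ / p₂)` by a fixed proportion of `s`. -/
lemma phase_gap {L₁ L₂ p₁ p₂ A x y ε : ℝ} (hL₁ : 0 < L₁) (hL₂ : 0 < L₂)
    (hp₁ : 0 < p₁) (hp₂ : 0 < p₂) (hA : A = ((p₁ * L₁) / (p₂ * L₂)) ^ (1 / (p₁ + p₂)))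
    (hx : 0 < x) (hy : 0 < y) (hε : 0 < ε) (hε1 : ε < 1)
    (hv : ε ≤ |(x / y) ^ p₁ / (A ^ (-p₁) * x ^ (p₁ * p₂ / (p₁ + p₂))) - 1|) :
    L₁ * A ^ (-p₁) * x ^ (p₁ * p₂ / (p₁ + p₂)) * (1 + p₁ / p₂ + ε ^ 2 / 9) ≤
      L₁ * (x / y) ^ p₁ + L₂ * y ^ p₂ := by
  have hA0 : 0 < A := by rw [hA]; positivity
  have hAp := Real.rpow_pos_of_pos hA0 (-p₁)
  have hxs := Real.rpow_pos_of_pos hx (p₁ * p₂ / (p₁ + p₂))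
  have hxy := Real.rpow_pos_of_pos (div_pos hx hy) p₁
  rw [phase_identity hL₁ hL₂ hp₁ hp₂ hA hx hy]
  set s := x ^ (p₁ * p₂ / (p₁ + p₂))
  set v := (x / y) ^ p₁ / (A ^ (-p₁) * s) with hvdef
  have hv0 : 0 < v := by positivity
  have h1 := sq_div_nine_le_sub_one_sub_log hv0 hε hε1 hv
  have h2 : (x / y) ^ p₁ = A ^ (-p₁) * s * v := by rw [hvdef]; field_simp
  rw [h2]
  have h3 : p₁ / p₂ - Real.log v ≤ (p₁ / p₂) * Real.exp (-(p₂ / p₁) * Real.log v) := by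
    have := Real.add_one_le_exp (-(p₂ / p₁) * Real.log v)
    calc p₁ / p₂ - Real.log v = (p₁ / p₂) * (-(p₂ / p₁) * Real.log v + 1) := by
          field_simp; ring
      _ ≤ _ := by gcongr
  calc _ ≤ L₁ * A ^ (-p₁) * s * (v + (p₁ / p₂) * Real.exp (-(p₂ / p₁) * Real.log v)) := by
        refine mul_le_mul_of_nonneg_left ?_ (by positivity)
        linarith
    _ = _ := by ring

/-! ### Concentration of the integrals at the saddle point -/

/-- Here `g` plays the role of `z ↦ z h₁ z` and `T` that of the tail of `X₁`. The linear bound on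
`g`, which comes from the boundedness of `h₁`, serves for small `z`. -/
lemma exists_exp_bound_of_ratio {T g : ℝ → ℝ} {C₁ L₁ p₁ α₁ M η : ℝ}
    (hC₁ : 0 < C₁) (hL₁ : 0 < L₁) (hp₁ : 0 < p₁) (hη0 : 0 < η) (hη1 : η < 1)
    (hgM : ∀ z, 0 < z → g z ≤ M * z)
    (htail₁ : Tendsto (fun x => T x / (C₁ * x ^ α₁ * Real.exp (-(L₁ * x ^ p₁)))) atTop (nhds 1))
    (hgT : Tendsto (fun x => g x / (L₁ * p₁ * x ^ p₁ * T x)) atTop (nhds 1)) :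
    ∃ K, 0 < K ∧ ∀ z, 0 < z → g z ≤ K * Real.exp (-((1 - η) * L₁ * z ^ p₁)) := by
  have hTpos : ∀ᶠ z in atTop, 0 < T z := by
    filter_upwards [eventually_exp_le_of_weibull hC₁ hL₁ hp₁ hη0 htail₁] with z hz
    exact (Real.exp_pos _).trans_le hz
  have hgup : ∀ᶠ z in atTop, g z ≤ Real.exp (-((1 - η) * L₁ * z ^ p₁)) := by
    refine eventually_le_exp_of_weibull (C := L₁ * p₁ * C₁) (α := p₁ + α₁) (by positivity) hL₁ hp₁
      hη0 ?_
    have := hgT.mul htail₁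
    rw [one_mul] at this
    refine this.congr' ?_
    filter_upwards [hTpos, eventually_gt_atTop 0] with z hz hz0
    rw [Real.rpow_add hz0]
    field_simp
  exact exists_global_exp_bound hp₁ (mul_pos (by linarith) hL₁)
    (fun R => ⟨|M| * R, fun z hz hzR => (hgM z hz).trans (by
      have := le_abs_self M
      have := abs_nonneg M
      nlinarith)⟩) hgup

/-- Lower bound for `P(X₁ X₂ > x)`, from the event `X₂ > y`, `X₁ > x / y` at the saddle point
`y = A x ^ (p₁ / (p₁ + p₂))`. -/
lemma eventually_exp_le_integral_tail {μ : Measure ℝ} [IsProbabilityMeasure μ]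
    {T : ℝ → ℝ} {L₁ L₂ p₁ p₂ A η : ℝ}
    (hL₁ : 0 < L₁) (hL₂ : 0 < L₂) (hp₁ : 0 < p₁) (hp₂ : 0 < p₂)
    (hA : A = ((p₁ * L₁) / (p₂ * L₂)) ^ (1 / (p₁ + p₂)))
    (hT : Antitone T) (hT0 : ∀ z, 0 ≤ T z) (hTint : ∀ x : ℝ, Integrable (fun y => T (x / y)) μ)
    (hTlow : ∀ᶠ z in atTop, Real.exp (-((1 + η) * L₁ * z ^ p₁)) ≤ T z)
    (hSlow : ∀ᶠ y in atTop, Real.exp (-((1 + η) * L₂ * y ^ p₂)) ≤ μ.real (Set.Ioi y)) :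
    ∀ᶠ x : ℝ in atTop,
      Real.exp (-((1 + η) * (L₁ * A ^ (-p₁) * x ^ (p₁ * p₂ / (p₁ + p₂)) * (1 + p₁ / p₂)))) ≤
        ∫ y, T (x / y) ∂μ := by
  have hA0 : 0 < A := by rw [hA]; positivity
  have hAp := Real.rpow_pos_of_pos hA0 (-p₁)
  set κ := p₁ * p₂ / (p₁ + p₂) with hκ
  have hylim : Tendsto (fun x : ℝ => A * x ^ (p₁ / (p₁ + p₂))) atTop atTop :=
    (tendsto_rpow_atTop (by positivity)).const_mul_atTop hA0
  have hzlim : Tendsto (fun x : ℝ => A⁻¹ * x ^ (p₂ / (p₁ + p₂))) atTop atTop :=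
    (tendsto_rpow_atTop (by positivity)).const_mul_atTop (by positivity)
  filter_upwards [hylim.eventually hSlow, hzlim.eventually hTlow, eventually_gt_atTop 0]
    with x h1 h2 hx
  have hxy : x / (A * x ^ (p₁ / (p₁ + p₂))) = A⁻¹ * x ^ (p₂ / (p₁ + p₂)) := by
    have : x = x ^ (p₁ / (p₁ + p₂)) * x ^ (p₂ / (p₁ + p₂)) := by
      rw [← Real.rpow_add hx, ← add_div, div_self (by positivity), Real.rpow_one]
    have h0 := Real.rpow_pos_of_pos hx (p₁ / (p₁ + p₂))
    nth_rewrite 1 [this]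
    field_simp
  have hy0 : 0 < A * x ^ (p₁ / (p₁ + p₂)) := by positivity
  have e1 : (A⁻¹ * x ^ (p₂ / (p₁ + p₂))) ^ p₁ = A ^ (-p₁) * x ^ κ := by
    rw [Real.mul_rpow (by positivity) (by positivity), Real.inv_rpow hA0.le,
      Real.rpow_neg hA0.le, ← Real.rpow_mul hx.le]
    congr 2
    rw [hκ]; ring
  have e2 : L₂ * (A * x ^ (p₁ / (p₁ + p₂))) ^ p₂ = L₁ * A ^ (-p₁) * x ^ κ * (p₁ / p₂) := by
    have hs := Real.rpow_pos_of_pos hx κ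
    rw [phase_identity hL₁ hL₂ hp₁ hp₂ hA hx hy0, hxy, e1, div_self (by positivity)]
    simp [hκ]
  have h3 : T (A⁻¹ * x ^ (p₂ / (p₁ + p₂))) * μ.real (Set.Ioi (A * x ^ (p₁ / (p₁ + p₂)))) ≤
      ∫ y, T (x / y) ∂μ := by
    have : ∫ y, (Set.Ioi (A * x ^ (p₁ / (p₁ + p₂)))).indicator
        (fun _ => T (A⁻¹ * x ^ (p₂ / (p₁ + p₂)))) y ∂μ ≤ ∫ y, T (x / y) ∂μ := by
      refine integral_mono ((integrable_const _).indicator measurableSet_Ioi) (hTint x) ?_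
      intro y
      by_cases hy : y ∈ Set.Ioi (A * x ^ (p₁ / (p₁ + p₂)))
      · simp only [Set.indicator_of_mem hy]
        refine hT ?_
        rw [← hxy]
        exact div_le_div_of_nonneg_left hx.le hy0 (le_of_lt hy)
      · simp only [Set.indicator_of_notMem hy]
        exact hT0 _
    rw [integral_indicator_const _ measurableSet_Ioi, smul_eq_mul, mul_comm] at this
    exact this
  refine le_trans ?_ h3
  calc Real.exp (-((1 + η) * (L₁ * A ^ (-p₁) * x ^ κ * (1 + p₁ / p₂))))
      = Real.exp (-((1 + η) * L₁ * (A⁻¹ * x ^ (p₂ / (p₁ + p₂))) ^ p₁)) *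
        Real.exp (-((1 + η) * L₂ * (A * x ^ (p₁ / (p₁ + p₂))) ^ p₂)) := by
        rw [← Real.exp_add, e1, mul_assoc (1 + η) L₂, e2]
        ring_nf
    _ ≤ _ := mul_le_mul h2 h1 (Real.exp_pos _).le (hT0 _)

/-- Pointwise comparison of `g (x / y)` with `D T (x / y)`, where `D` is the claimed ratio of the
integrals. Inside the window `|v - 1| < ε` the two agree up to factors `(1 ± ε) ^ 2`; outside it both
are absorbed by the error term `E exp ((1 - η) L₂ y ^ p₂)`, whose `y`-dependence is integrable. -/
lemma pointwise_comparison {T g : ℝ → ℝ} {L₁ L₂ p₁ p₂ A K₁ K₂ R η ε x y : ℝ}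
    (hL₁ : 0 < L₁) (hL₂ : 0 < L₂) (hp₁ : 0 < p₁) (hp₂ : 0 < p₂)
    (hA : A = ((p₁ * L₁) / (p₂ * L₂)) ^ (1 / (p₁ + p₂)))
    (hT0 : ∀ z, 0 ≤ T z) (hg0 : ∀ z, 0 < z → 0 ≤ g z)
    (hη1 : η < 1) (hε : 0 < ε) (hε1 : ε < 1) (hK₁ : 0 < K₁) (hK₂ : 0 < K₂)
    (hgK : ∀ z, 0 < z → g z ≤ K₁ * Real.exp (-((1 - η) * L₁ * z ^ p₁)))
    (hTK : ∀ z, 0 < z → T z ≤ K₂ * Real.exp (-((1 - η) * L₁ * z ^ p₁)))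
    (hR0 : 0 < R)
    (hR : ∀ z, R ≤ z → (1 - ε < g z / (L₁ * p₁ * z ^ p₁ * T z) ∧
      g z / (L₁ * p₁ * z ^ p₁ * T z) < 1 + ε) ∧ 0 < T z ∧ 0 < z)
    (hRx : R ^ p₁ ≤ (1 - ε) * A ^ (-p₁) * x ^ (p₁ * p₂ / (p₁ + p₂)))
    (hx : 0 < x) (hy : 0 < y) {D E : ℝ}
    (hDdef : D = L₁ * p₁ * A ^ (-p₁) * x ^ (p₁ * p₂ / (p₁ + p₂)))
    (hE : E = Real.exp (-((1 - η) *
      (L₁ * A ^ (-p₁) * x ^ (p₁ * p₂ / (p₁ + p₂)) * (1 + p₁ / p₂ + ε ^ 2 / 9))))) :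
    g (x / y) ≤ (1 + ε) ^ 2 * D * T (x / y) +
        (K₁ + K₂) * E * Real.exp ((1 - η) * L₂ * y ^ p₂) ∧
      (1 - ε) ^ 2 * D * T (x / y) ≤ g (x / y) +
        D * ((K₁ + K₂) * E * Real.exp ((1 - η) * L₂ * y ^ p₂)) := by
  have hA0 : 0 < A := by rw [hA]; positivity
  have hAp := Real.rpow_pos_of_pos hA0 (-p₁)
  set κ := p₁ * p₂ / (p₁ + p₂) with hκ
  have hxs := Real.rpow_pos_of_pos hx κ
  have hD0 : 0 < D := by rw [hDdef]; positivity
  set K := K₁ + K₂ with hK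
  have hz : 0 < x / y := by positivity
  have hF := Real.exp_pos ((1 - η) * L₂ * y ^ p₂)
  have hE0 : 0 < E := hE ▸ Real.exp_pos _
  have hT0' := hT0 (x / y)
  rcases le_or_gt ε |(x / y) ^ p₁ / (A ^ (-p₁) * x ^ κ) - 1| with hv | hv
  · have hgap := phase_gap hL₁ hL₂ hp₁ hp₂ hA hx hy hε hε1 hv
    have hexp : Real.exp (-((1 - η) * L₁ * (x / y) ^ p₁)) ≤ E * Real.exp ((1 - η) * L₂ * y ^ p₂) := by
      rw [hE, ← Real.exp_add, Real.exp_le_exp]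
      have := mul_le_mul_of_nonneg_left hgap (show 0 ≤ 1 - η by linarith)
      linarith
    have hK0 : 0 < K := by positivity
    constructor
    · calc g (x / y) ≤ K₁ * Real.exp (-((1 - η) * L₁ * (x / y) ^ p₁)) := hgK _ hz
        _ ≤ K * (E * Real.exp ((1 - η) * L₂ * y ^ p₂)) := by gcongr; linarith
        _ = 0 + K * E * Real.exp ((1 - η) * L₂ * y ^ p₂) := by ring
        _ ≤ _ := by gcongr; positivity
    · have hle : T (x / y) ≤ K * E * Real.exp ((1 - η) * L₂ * y ^ p₂) := by
        calc T (x / y) ≤ K₂ * Real.exp (-((1 - η) * L₁ * (x / y) ^ p₁)) := hTK _ hz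
          _ ≤ K * (E * Real.exp ((1 - η) * L₂ * y ^ p₂)) := by gcongr; linarith
          _ = _ := by ring
      calc (1 - ε) ^ 2 * D * T (x / y) ≤ 1 * D * T (x / y) := by
            gcongr
            nlinarith
        _ = 0 + D * T (x / y) := by ring
        _ ≤ _ := by gcongr; exact hg0 _ hz
  · rw [abs_lt] at hv
    set v := (x / y) ^ p₁ / (A ^ (-p₁) * x ^ κ) with hvdef
    have hzv : (x / y) ^ p₁ = A ^ (-p₁) * x ^ κ * v := by rw [hvdef]; field_simp
    have hzR : R ≤ x / y := by
      rw [← Real.rpow_le_rpow_iff hR0.le hz.le hp₁, hzv]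
      refine hRx.trans ?_
      nlinarith [mul_pos hAp hxs]
    obtain ⟨⟨h2, h3⟩, h4, -⟩ := hR _ hzR
    have hden : L₁ * p₁ * (x / y) ^ p₁ * T (x / y) = v * (D * T (x / y)) := by
      rw [hzv, hDdef]; ring
    have hv0 : 0 < v := by linarith
    have hDT : 0 < D * T (x / y) := by positivity
    rw [hden, lt_div_iff₀ (by positivity)] at h2
    rw [hden, div_lt_iff₀ (by positivity)] at h3
    have hrest : 0 ≤ K * E * Real.exp ((1 - η) * L₂ * y ^ p₂) := by positivity
    constructor
    · calc g (x / y) ≤ (1 + ε) * (v * (D * T (x / y))) := h3.le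
        _ ≤ (1 + ε) * ((1 + ε) * (D * T (x / y))) := by gcongr; linarith
        _ = (1 + ε) ^ 2 * D * T (x / y) := by ring
        _ ≤ _ := by linarith
    · calc (1 - ε) ^ 2 * D * T (x / y) = (1 - ε) * ((1 - ε) * (D * T (x / y))) := by ring
        _ ≤ (1 - ε) * (v * (D * T (x / y))) := by
          have : 0 ≤ 1 - ε := by linarith
          gcongr; linarith
        _ ≤ g (x / y) := h2.le
        _ ≤ _ := by
          have : 0 ≤ D * (K * E * Real.exp ((1 - η) * L₂ * y ^ p₂)) := by positivity
          linarith

/-- Two-sided comparison of the integrals of `g (x / y)` and `T (x / y)`, with relative error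
of order `ε`. -/
lemma window_estimate {μ : Measure ℝ} [IsProbabilityMeasure μ] (hμ : ∀ᵐ y ∂μ, 0 < y)
    {T g : ℝ → ℝ} {C₁ C₂ L₁ L₂ p₁ p₂ α₁ α₂ A M : ℝ}
    (hC₁ : 0 < C₁) (hC₂ : 0 < C₂) (hL₁ : 0 < L₁) (hL₂ : 0 < L₂) (hp₁ : 0 < p₁) (hp₂ : 0 < p₂)
    (hA : A = ((p₁ * L₁) / (p₂ * L₂)) ^ (1 / (p₁ + p₂)))
    (hT : Antitone T) (hT0 : ∀ z, 0 ≤ T z) (hT1 : ∀ z, T z ≤ 1)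
    (hgm : Measurable g) (hg0 : ∀ z, 0 < z → 0 ≤ g z) (hgM : ∀ z, 0 < z → g z ≤ M * z)
    (htail₁ : Tendsto (fun x => T x / (C₁ * x ^ α₁ * Real.exp (-(L₁ * x ^ p₁)))) atTop (nhds 1))
    (htail₂ : Tendsto (fun x => μ.real (Set.Ioi x) / (C₂ * x ^ α₂ * Real.exp (-(L₂ * x ^ p₂))))
      atTop (nhds 1))
    (hgT : Tendsto (fun x => g x / (L₁ * p₁ * x ^ p₁ * T x)) atTop (nhds 1))
    {ε : ℝ} (hε : 0 < ε) (hε1 : ε < 1) :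
    ∀ᶠ x in atTop,
      0 < ∫ y, T (x / y) ∂μ ∧
      ∫ y, g (x / y) ∂μ ≤ ((1 + ε) ^ 2 + ε) *
        (L₁ * p₁ * A ^ (-p₁) * x ^ (p₁ * p₂ / (p₁ + p₂)) * ∫ y, T (x / y) ∂μ) ∧
      ((1 - ε) ^ 2 - ε) *
        (L₁ * p₁ * A ^ (-p₁) * x ^ (p₁ * p₂ / (p₁ + p₂)) * ∫ y, T (x / y) ∂μ) ≤
        ∫ y, g (x / y) ∂μ := by
  have hA0 : 0 < A := by rw [hA]; positivity
  have hAp := Real.rpow_pos_of_pos hA0 (-p₁)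
  set κ := p₁ * p₂ / (p₁ + p₂) with hκ
  have hκ0 : 0 < κ := by positivity
  set c := 1 + p₁ / p₂ with hc
  have hc0 : 0 < c := by positivity
  set δ := ε ^ 2 / 9 with hδ
  have hδ0 : 0 < δ := by positivity
  -- `η` is small enough that `(1 - η) (c + δ)` still exceeds `(1 + η) c`
  obtain ⟨η, hη0, hη1, hη⟩ : ∃ η : ℝ, 0 < η ∧ η < 1 ∧ (1 + η) * c < (1 - η) * (c + δ) := by
    refine ⟨δ / (2 * (2 * c + δ)), by positivity, ?_, ?_⟩
    · rw [div_lt_one (by positivity)]; linarith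
    · have : δ / (2 * (2 * c + δ)) * (2 * c + δ) = δ / 2 := by field_simp
      nlinarith
  have hTup := eventually_le_exp_of_weibull hC₁ hL₁ hp₁ hη0 htail₁
  have hTlow := eventually_exp_le_of_weibull hC₁ hL₁ hp₁ hη0 htail₁
  have hSlow := eventually_exp_le_of_weibull hC₂ hL₂ hp₂ hη0 htail₂
  have hSup := eventually_le_exp_of_weibull hC₂ hL₂ hp₂ (half_pos hη0) htail₂
  have hTpos : ∀ᶠ z in atTop, 0 < T z := by
    filter_upwards [hTlow] with z hz using (Real.exp_pos _).trans_le hz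
  have hb : 0 < (1 - η) * L₁ := mul_pos (by linarith) hL₁
  obtain ⟨K₁, hK₁, hgK⟩ := exists_exp_bound_of_ratio hC₁ hL₁ hp₁ hη0 hη1 hgM htail₁ hgT
  obtain ⟨K₂, hK₂, hTK⟩ := exists_global_exp_bound hp₁ hb
    (fun R => ⟨1, fun z _ _ => hT1 z⟩) hTup
  set θ := (1 - η) * L₂ with hθ
  have hθ0 : 0 < θ := mul_pos (by linarith) hL₂
  have hint : Integrable (fun y => Real.exp (θ * y ^ p₂)) μ :=
    integrable_exp_rpow hμ hp₂ hθ0 (b := (1 - η / 2) * L₂) (by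
      rw [hθ]; exact mul_lt_mul_of_pos_right (by linarith) hL₂) hSup
  set m := ∫ y, Real.exp (θ * y ^ p₂) ∂μ with hm
  have hm0 : 0 ≤ m := integral_nonneg fun y => (Real.exp_pos _).le
  set K := K₁ + K₂ with hK
  set a := L₁ * A ^ (-p₁) with ha
  have ha0 : 0 < a := by positivity
  have hslim : Tendsto (fun x : ℝ => x ^ κ) atTop atTop := tendsto_rpow_atTop hκ0
  -- off-window contributions are negligible against the lower bound for the tail of the product
  have hsmall : ∀ᶠ x : ℝ in atTop, K * m * Real.exp (-((1 - η) * (a * x ^ κ * (c + δ)))) ≤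
      ε * Real.exp (-((1 + η) * (a * x ^ κ * c))) := by
    have hd : 0 < a * ((1 - η) * (c + δ) - (1 + η) * c) := mul_pos ha0 (by linarith)
    have h1 : Tendsto (fun x : ℝ => K * m *
        Real.exp (-(a * ((1 - η) * (c + δ) - (1 + η) * c) * x ^ κ))) atTop (nhds 0) := by
      have := (Real.tendsto_exp_neg_atTop_nhds_zero.comp
        (hslim.const_mul_atTop hd)).const_mul (K * m)
      rw [mul_zero] at this
      exact this
    filter_upwards [h1.eventually (gt_mem_nhds hε)] with x hx
    have e : Real.exp (-((1 - η) * (a * x ^ κ * (c + δ)))) =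
        Real.exp (-(a * ((1 - η) * (c + δ) - (1 + η) * c) * x ^ κ)) *
        Real.exp (-((1 + η) * (a * x ^ κ * c))) := by
      rw [← Real.exp_add]; ring_nf
    rw [e, ← mul_assoc]
    gcongr
  have hDlim : ∀ᶠ x : ℝ in atTop, 1 ≤ L₁ * p₁ * A ^ (-p₁) * x ^ κ :=
    (hslim.const_mul_atTop (by positivity)).eventually_ge_atTop 1
  have hTmeas : ∀ x : ℝ, Measurable fun y => T (x / y) := fun x =>
    hT.measurable.comp (by fun_prop)
  have hTint : ∀ x : ℝ, Integrable (fun y => T (x / y)) μ := fun x =>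
    Integrable.of_bound (hTmeas x).aestronglyMeasurable 1 (ae_of_all _ fun y => by
      rw [Real.norm_of_nonneg (hT0 _)]; exact hT1 _)
  have hgint : ∀ x : ℝ, 0 < x → Integrable (fun y => g (x / y)) μ := fun x hx =>
    Integrable.of_bound (hgm.comp (by fun_prop)).aestronglyMeasurable K₁ (by
      filter_upwards [hμ] with y hy
      rw [Real.norm_of_nonneg (hg0 _ (by positivity))]
      refine (hgK _ (by positivity)).trans (mul_le_of_le_one_right hK₁.le ?_)
      rw [Real.exp_le_one_iff]
      have := Real.rpow_pos_of_pos (div_pos hx hy) p₁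
      nlinarith)
  have hBlow := eventually_exp_le_integral_tail hL₁ hL₂ hp₁ hp₂ hA hT hT0 hTint hTlow hSlow
  -- on the window `x / y` is large, so the asymptotic relation between `g` and `T` applies
  obtain ⟨R, hR⟩ := eventually_atTop.1 (((hgT.eventually (lt_mem_nhds
    (show 1 - ε < 1 by linarith))).and (hgT.eventually (gt_mem_nhds
    (show 1 < 1 + ε by linarith)))).and (hTpos.and (eventually_gt_atTop 0)))
  have hR0 : 0 < R := (hR R le_rfl).2.2
  have hRlim : ∀ᶠ x : ℝ in atTop, R ^ p₁ ≤ (1 - ε) * A ^ (-p₁) * x ^ κ :=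
    (hslim.const_mul_atTop (mul_pos (by linarith) hAp)).eventually_ge_atTop _
  filter_upwards [hsmall, hDlim, hBlow, hRlim, eventually_gt_atTop 0] with x h1 hD hB hRx hx
  set D := L₁ * p₁ * A ^ (-p₁) * x ^ κ with hDdef
  set B := ∫ y, T (x / y) ∂μ with hBdef
  set E := Real.exp (-((1 - η) * (a * x ^ κ * (c + δ)))) with hE
  have hxs := Real.rpow_pos_of_pos hx κ
  have hB0 : 0 < B := (Real.exp_pos _).trans_le hB
  have hsB : K * m * E ≤ ε * B := h1.trans (by gcongr)
  have hpt : ∀ y, 0 < y →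
      g (x / y) ≤ (1 + ε) ^ 2 * D * T (x / y) + K * E * Real.exp (θ * y ^ p₂) ∧
      (1 - ε) ^ 2 * D * T (x / y) ≤ g (x / y) + D * (K * E * Real.exp (θ * y ^ p₂)) :=
    fun y hy => pointwise_comparison hL₁ hL₂ hp₁ hp₂ hA hT0 hg0 hη1 hε hε1 hK₁ hK₂ hgK hTK hR0 hR
      hRx hx hy hDdef hE
  have hup : ∫ y, g (x / y) ∂μ ≤ (1 + ε) ^ 2 * D * B + K * E * m := by
    rw [hBdef, hm, ← integral_const_mul, ← integral_const_mul, ← integral_add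
      ((hTint x).const_mul _) (hint.const_mul _)]
    refine integral_mono_ae (hgint x hx) (((hTint x).const_mul _).add (hint.const_mul _)) ?_
    filter_upwards [hμ] with y hy using (hpt y hy).1
  have hlow : (1 - ε) ^ 2 * D * B ≤ ∫ y, g (x / y) ∂μ + D * (K * E * m) := by
    rw [hBdef, hm, ← integral_const_mul, ← integral_const_mul, ← integral_const_mul,
      ← integral_add (hgint x hx) ((hint.const_mul _).const_mul _)]
    refine integral_mono_ae ((hTint x).const_mul _)
      ((hgint x hx).add ((hint.const_mul _).const_mul _)) ?_
    filter_upwards [hμ] with y hy using (hpt y hy).2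
  refine ⟨hB0, ?_, ?_⟩
  · have : ε * B ≤ ε * (D * B) := by
      gcongr
      exact le_mul_of_one_le_left hB0.le hD
    linarith
  · have : D * (K * m * E) ≤ D * (ε * B) := by gcongr
    linarith

/-- The asymptotic statement in terms of the law `μ` of `X₂`, the tail `T` of `X₁` and
`g z = z h₁ z`. -/
lemma tendsto_integral_ratio {μ : Measure ℝ} [IsProbabilityMeasure μ] (hμ : ∀ᵐ y ∂μ, 0 < y)
    {T g : ℝ → ℝ} {C₁ C₂ L₁ L₂ p₁ p₂ α₁ α₂ A M : ℝ}
    (hC₁ : 0 < C₁) (hC₂ : 0 < C₂) (hL₁ : 0 < L₁) (hL₂ : 0 < L₂) (hp₁ : 0 < p₁) (hp₂ : 0 < p₂)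
    (hA : A = ((p₁ * L₁) / (p₂ * L₂)) ^ (1 / (p₁ + p₂)))
    (hT : Antitone T) (hT0 : ∀ z, 0 ≤ T z) (hT1 : ∀ z, T z ≤ 1)
    (hgm : Measurable g) (hg0 : ∀ z, 0 < z → 0 ≤ g z) (hgM : ∀ z, 0 < z → g z ≤ M * z)
    (htail₁ : Tendsto (fun x => T x / (C₁ * x ^ α₁ * Real.exp (-(L₁ * x ^ p₁)))) atTop (nhds 1))
    (htail₂ : Tendsto (fun x => μ.real (Set.Ioi x) / (C₂ * x ^ α₂ * Real.exp (-(L₂ * x ^ p₂))))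
      atTop (nhds 1))
    (hgT : Tendsto (fun x => g x / (L₁ * p₁ * x ^ p₁ * T x)) atTop (nhds 1)) :
    Tendsto (fun x => (∫ y, g (x / y) ∂μ) /
      (L₁ * p₁ * A ^ (-p₁) * x ^ (p₁ * p₂ / (p₁ + p₂)) * ∫ y, T (x / y) ∂μ)) atTop (nhds 1) := by
  have hA0 : 0 < A := by rw [hA]; positivity
  rw [Metric.tendsto_nhds]
  intro r hr
  set ε := min (r / 5) (1 / 2) with hεdef
  have hε : 0 < ε := by positivity
  have hε1 : ε < 1 := (min_le_right _ _).trans_lt (by norm_num)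
  have hεr : ε ≤ r / 5 := min_le_left _ _
  filter_upwards [window_estimate hμ hC₁ hC₂ hL₁ hL₂ hp₁ hp₂ hA hT hT0 hT1 hgm hg0 hgM htail₁
    htail₂ hgT hε hε1, eventually_gt_atTop 0] with x ⟨hB, h1, h2⟩ hx
  have hden : 0 < L₁ * p₁ * A ^ (-p₁) * x ^ (p₁ * p₂ / (p₁ + p₂)) * ∫ y, T (x / y) ∂μ := by
    positivity
  rw [← div_le_iff₀ hden] at h1
  rw [← le_div_iff₀ hden] at h2
  rw [Real.dist_eq, abs_lt]
  constructor <;> nlinarith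

/-! ### Densities and tails of products -/

/-- A density as in the hypotheses, which need not be measurable, can be replaced by a measurable
one that vanishes on `(-∞, 0]` and agrees with it near infinity. Below a threshold one takes a
measurable minorant with the same integrals; above it the given density is monotone. -/
lemma exists_measurable_density {ν : Measure ℝ} [IsProbabilityMeasure ν] (hν : ∀ᵐ x ∂ν, 0 < x)
    {h₁ : ℝ → ℝ} (h0 : ∀ x, 0 ≤ h₁ x) {M : ℝ} (hM : ∀ x, h₁ x ≤ M) {x₀ : ℝ}
    (hdec : AntitoneOn h₁ (Set.Ici x₀))
    (hdens : ν = volume.withDensity (fun x => ENNReal.ofReal (h₁ x))) :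
    ∃ f : ℝ → ℝ, Measurable f ∧ (∀ x, 0 ≤ f x) ∧ (∀ x, f x ≤ M) ∧ (∀ x, x ≤ 0 → f x = 0) ∧
      (∀ᶠ x in atTop, f x = h₁ x) ∧ ν = volume.withDensity (fun x => ENNReal.ofReal (f x)) := by
  obtain ⟨g, hgm, hgle, hgd⟩ := exists_measurable_le_withDensity_eq (μ := (volume : Measure ℝ))
    (fun x => ENNReal.ofReal (h₁ x))
  have hgtop : ∀ x, g x ≠ ⊤ := fun x => ne_top_of_le_ne_top ENNReal.ofReal_ne_top (hgle x)
  have hM0 : 0 ≤ M := (h0 0).trans (hM 0)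
  set R := max x₀ 1 with hR
  have hR1 : 1 ≤ R := le_max_right _ _
  -- an everywhere antitone function agreeing with `h₁` on `[R, ∞)`
  have hmem : ∀ x, max R x ∈ Set.Ici x₀ := fun x => (le_max_left x₀ 1).trans (le_max_left R x)
  have hanti : Antitone fun x => h₁ (max R x) := fun x y hxy =>
    hdec (hmem x) (hmem y) (max_le_max le_rfl hxy)
  have hmax : ∀ x, R ≤ x → h₁ (max R x) = h₁ x := fun x hx => by rw [max_eq_right hx]
  have hνg : ν = volume.withDensity g := by rw [hdens, hgd]
  have hfin : ∫⁻ x, g x ≠ ⊤ := by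
    have : ν Set.univ = ∫⁻ x, g x := by
      rw [hνg, withDensity_apply _ MeasurableSet.univ, Measure.restrict_univ]
    rw [← this]
    exact measure_ne_top _ _
  have hneg : ∀ᵐ x : ℝ, x ≤ 0 → g x = 0 := by
    have h1 : ν (Set.Iic 0) = 0 := by
      rw [ae_iff] at hν
      convert hν using 2
      ext x; simp
    rw [hνg, withDensity_apply _ measurableSet_Iic, lintegral_eq_zero_iff hgm,
      Filter.EventuallyEq, ae_restrict_iff' measurableSet_Iic] at h1
    exact h1
  have hbig : ∀ᵐ x : ℝ, R ≤ x → g x = ENNReal.ofReal (h₁ (max R x)) := by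
    have hm2 : Measurable fun x => ENNReal.ofReal (h₁ (max R x)) := hanti.measurable.ennreal_ofReal
    have h1 : volume.withDensity ((Set.Ici R).indicator g) =
        volume.withDensity ((Set.Ici R).indicator fun x => ENNReal.ofReal (h₁ (max R x))) := by
      rw [withDensity_indicator measurableSet_Ici, withDensity_indicator measurableSet_Ici]
      have h2 : (volume.restrict (Set.Ici R)).withDensity
          (fun x => ENNReal.ofReal (h₁ (max R x))) =
          (volume.restrict (Set.Ici R)).withDensity (fun x => ENNReal.ofReal (h₁ x)) := by
        refine withDensity_congr_ae ?_
        rw [Filter.EventuallyEq, ae_restrict_iff' measurableSet_Ici]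
        exact ae_of_all _ fun x hx => by rw [hmax x hx]
      rw [h2, ← restrict_withDensity measurableSet_Ici, ← restrict_withDensity measurableSet_Ici,
        hgd]
    rw [withDensity_eq_iff (hgm.indicator measurableSet_Ici).aemeasurable
      (hm2.indicator measurableSet_Ici).aemeasurable
      (ne_top_of_le_ne_top hfin (lintegral_mono (Set.indicator_le_self _ _)))] at h1
    filter_upwards [h1] with x hx hxR
    simpa [Set.indicator, hxR] using hx
  refine ⟨fun x => if x ≤ 0 then 0 else if x < R then (g x).toReal else h₁ (max R x),
    ?_, ?_, ?_, ?_, ?_, ?_⟩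
  · exact Measurable.ite measurableSet_Iic measurable_const
      (Measurable.ite measurableSet_Iio hgm.ennreal_toReal hanti.measurable)
  · intro x
    dsimp only
    split_ifs
    exacts [le_rfl, ENNReal.toReal_nonneg, h0 _]
  · intro x
    dsimp only
    split_ifs
    · exact hM0
    · exact (ENNReal.toReal_le_of_le_ofReal (h0 x) (hgle x)).trans (hM x)
    · exact hM _
  · intro x hx
    simp [hx]
  · filter_upwards [eventually_ge_atTop R] with x hx
    rw [if_neg (by linarith), if_neg (by linarith), hmax x hx]
  · rw [hνg]
    refine withDensity_congr_ae ?_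
    filter_upwards [hneg, hbig] with x h1 h2
    split_ifs with h3 h4
    · simp [h1 h3]
    · rw [ENNReal.ofReal_toReal (hgtop x)]
    · exact h2 (not_lt.1 h4)

lemma setLIntegral_preimage_mul {f : ℝ → ℝ} (hf : Measurable f) {y : ℝ} (hy : 0 < y) {S : Set ℝ}
    (hS : MeasurableSet S) :
    ∫⁻ z in (fun z => z * y) ⁻¹' S, ENNReal.ofReal (f z) =
      ∫⁻ x in S, ENNReal.ofReal (y⁻¹ * f (x / y)) := by
  have hmeas : Measurable fun x => ENNReal.ofReal (y⁻¹ * f (x / y)) := by fun_prop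
  conv_rhs => rw [← Real.smul_map_volume_mul_right hy.ne']
  rw [Measure.restrict_smul, lintegral_smul_measure,
    setLIntegral_map hS hmeas (by fun_prop), smul_eq_mul,
    ← lintegral_const_mul _ (by fun_prop)]
  refine lintegral_congr fun z => ?_
  rw [abs_of_pos hy, ← ENNReal.ofReal_mul hy.le, mul_div_cancel_right₀ _ hy.ne',
    mul_inv_cancel_left₀ hy.ne']

/-- The product of independent positive variables, the first with density `f`, has density
`∫ y⁻¹ f (x / y) dμ(y)`. The integrand is written as `x⁻¹ ((x / y) f (x / y))`; boundedness of
`z f z` makes the integral finite for every `x`. -/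
lemma map_mul_prod_withDensity {f : ℝ → ℝ} (hf : Measurable f) (hf0 : ∀ x, 0 ≤ f x)
    (hfneg : ∀ x, x ≤ 0 → f x = 0) {K : ℝ} (hK : ∀ z, 0 < z → z * f z ≤ K)
    {μ : Measure ℝ} [IsProbabilityMeasure μ] (hμ : ∀ᵐ y ∂μ, 0 < y)
    [SFinite (volume.withDensity (fun x => ENNReal.ofReal (f x)))] :
    ((volume.withDensity (fun x => ENNReal.ofReal (f x))).prod μ).map (fun q => q.1 * q.2) =
      volume.withDensity (fun x => ENNReal.ofReal (x⁻¹ * ∫ y, (x / y) * f (x / y) ∂μ)) := by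
  ext S hS
  have hmul : Measurable fun q : ℝ × ℝ => q.1 * q.2 := by fun_prop
  rw [Measure.map_apply hmul hS, Measure.prod_apply_symm (hmul hS), withDensity_apply _ hS]
  have h1 : ∀ᵐ y ∂μ, (volume.withDensity (fun x => ENNReal.ofReal (f x)))
      ((fun z => (z, y)) ⁻¹' ((fun q : ℝ × ℝ => q.1 * q.2) ⁻¹' S)) =
      ∫⁻ x in S, ENNReal.ofReal (y⁻¹ * f (x / y)) := by
    filter_upwards [hμ] with y hy
    rw [← setLIntegral_preimage_mul hf hy hS, ← withDensity_apply _
      ((show Measurable fun z : ℝ => z * y by fun_prop) hS)]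
    rfl
  rw [lintegral_congr_ae h1, lintegral_lintegral_swap (by fun_prop)]
  refine lintegral_congr fun x => ?_
  rcases le_or_gt x 0 with hx | hx
  · have hz : ∀ᵐ y ∂μ, f (x / y) = 0 := by
      filter_upwards [hμ] with y hy using hfneg _ (div_nonpos_of_nonpos_of_nonneg hx hy.le)
    have e1 : (fun y => ENNReal.ofReal (y⁻¹ * f (x / y))) =ᵐ[μ] fun _ => 0 := by
      filter_upwards [hz] with y hy
      simp [hy]
    have e2 : (fun y => (x / y) * f (x / y)) =ᵐ[μ] fun _ => 0 := by
      filter_upwards [hz] with y hy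
      simp [hy]
    rw [lintegral_congr_ae e1, integral_congr_ae e2]
    simp
  · rw [← integral_const_mul, ofReal_integral_eq_lintegral_ofReal]
    · refine lintegral_congr fun y => ?_
      congr 1
      field_simp
    · refine Integrable.const_mul (Integrable.of_bound (C := K)
        (Measurable.aestronglyMeasurable (by fun_prop)) ?_) _
      filter_upwards [hμ] with y hy
      have hz : 0 < x / y := by positivity
      rw [Real.norm_of_nonneg (mul_nonneg hz.le (hf0 _))]
      exact hK _ hz
    · filter_upwards [hμ] with y hy
      have := hf0 (x / y)
      positivity

lemma prod_tail_eq_integral {μ ν : Measure ℝ} [IsProbabilityMeasure μ] [IsProbabilityMeasure ν]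
    (hμ : ∀ᵐ y ∂μ, 0 < y) (x : ℝ) :
    (((ν.prod μ).map (fun q => q.1 * q.2)) (Set.Ioi x)).toReal =
      ∫ y, ν.real (Set.Ioi (x / y)) ∂μ := by
  have hmul : Measurable fun q : ℝ × ℝ => q.1 * q.2 := by fun_prop
  have hanti : Antitone fun z => ν (Set.Ioi z) := fun a b hab =>
    measure_mono (Set.Ioi_subset_Ioi hab)
  rw [Measure.map_apply hmul measurableSet_Ioi,
    Measure.prod_apply_symm (hmul measurableSet_Ioi)]
  have h1 : ∀ᵐ y ∂μ, ν ((fun z => (z, y)) ⁻¹' ((fun q : ℝ × ℝ => q.1 * q.2) ⁻¹' Set.Ioi x)) =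
      ν (Set.Ioi (x / y)) := by
    filter_upwards [hμ] with y hy
    congr 1
    ext z
    simp [div_lt_iff₀ hy]
  rw [lintegral_congr_ae h1]
  exact (integral_toReal
    (hanti.measurable.comp (by fun_prop : Measurable fun y : ℝ => x / y)).aemeasurable
    (ae_of_all _ fun y => measure_lt_top _ _)).symm

/-- density asymptotics of a product of two independent random variables
with Weibull-type tails; Lemma `lem0`, equation (resDens). -/
theorem product_density_asymptotics
    {Ω : Type*} [MeasureSpace Ω] [IsProbabilityMeasure (ℙ : Measure Ω)]
    (X₁ X₂ : Ω → ℝ) (hX₁ : Measurable X₁) (hX₂ : Measurable X₂)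
    (hpos₁ : ∀ᵐ ω ∂ℙ, 0 < X₁ ω) (hpos₂ : ∀ᵐ ω ∂ℙ, 0 < X₂ ω)
    (hindep : IndepFun X₁ X₂ ℙ)
    (C₁ C₂ L₁ L₂ p₁ p₂ : ℝ) (α₁ α₂ : ℝ)
    (hC₁ : 0 < C₁) (hC₂ : 0 < C₂) (hL₁ : 0 < L₁) (hL₂ : 0 < L₂)
    (hp₁ : 0 < p₁) (hp₂ : 0 < p₂)
    (htail₁ : Tendsto (fun x : ℝ =>
        (ℙ {ω | X₁ ω > x}).toReal / (C₁ * x ^ α₁ * Real.exp (-(L₁ * x ^ p₁))))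
      atTop (nhds 1))
    (htail₂ : Tendsto (fun x : ℝ =>
        (ℙ {ω | X₂ ω > x}).toReal / (C₂ * x ^ α₂ * Real.exp (-(L₂ * x ^ p₂))))
      atTop (nhds 1))
    (A : ℝ) (hA : A = ((p₁ * L₁) / (p₂ * L₂)) ^ (1 / (p₁ + p₂)))
    -- `X₁` has a bounded, ultimately decreasing density `h₁`
    (h₁ : ℝ → ℝ) (h₁nonneg : ∀ x, 0 ≤ h₁ x)
    (h₁dens : Measure.map X₁ ℙ
      = MeasureTheory.volume.withDensity (fun x => ENNReal.ofReal (h₁ x)))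
    (h₁bdd : ∃ M : ℝ, ∀ x, h₁ x ≤ M)
    (h₁dec : ∃ x₀ : ℝ, AntitoneOn h₁ (Set.Ici x₀))
    (h₁asym : Tendsto (fun x : ℝ =>
        h₁ x / (L₁ * p₁ * x ^ (p₁ - 1) * (ℙ {ω | X₁ ω > x}).toReal))
      atTop (nhds 1)) :
    -- then `X₁ · X₂` has a density `h` with the stated asymptotic behaviour
    ∃ h : ℝ → ℝ, (∀ x, 0 ≤ h x) ∧
      Measure.map (fun ω => X₁ ω * X₂ ω) ℙ
        = MeasureTheory.volume.withDensity (fun x => ENNReal.ofReal (h x)) ∧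
      Tendsto (fun x : ℝ =>
          h x / (L₁ * p₁ * A ^ (-p₁) * x ^ (p₁ * p₂ / (p₁ + p₂) - 1) *
            (ℙ {ω | X₁ ω * X₂ ω > x}).toReal))
        atTop (nhds 1) := by
  obtain ⟨M, hM⟩ := h₁bdd
  obtain ⟨x₀, hx₀⟩ := h₁dec
  set ν := Measure.map X₁ ℙ with hν
  set μ := Measure.map X₂ ℙ with hμ
  have : IsProbabilityMeasure ν := Measure.isProbabilityMeasure_map hX₁.aemeasurable
  have : IsProbabilityMeasure μ := Measure.isProbabilityMeasure_map hX₂.aemeasurable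
  have hνpos : ∀ᵐ x ∂ν, 0 < x := (ae_map_iff hX₁.aemeasurable measurableSet_Ioi).2 hpos₁
  have hμpos : ∀ᵐ x ∂μ, 0 < x := (ae_map_iff hX₂.aemeasurable measurableSet_Ioi).2 hpos₂
  have hT₁ : ∀ x, (ℙ {ω | X₁ ω > x}).toReal = ν.real (Set.Ioi x) := fun x => by
    rw [hν, measureReal_def, Measure.map_apply hX₁ measurableSet_Ioi]; rfl
  have hT₂ : ∀ x, (ℙ {ω | X₂ ω > x}).toReal = μ.real (Set.Ioi x) := fun x => by
    rw [hμ, measureReal_def, Measure.map_apply hX₂ measurableSet_Ioi]; rfl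
  simp only [hT₁] at htail₁ h₁asym
  simp only [hT₂] at htail₂
  have hprod : Measure.map (fun ω => X₁ ω * X₂ ω) ℙ = (ν.prod μ).map (fun q => q.1 * q.2) := by
    rw [← hindep.map_prod_eq_prod_map_map hX₁.aemeasurable hX₂.aemeasurable,
      Measure.map_map (by fun_prop) (by fun_prop)]
    rfl
  have hT : ∀ x, (ℙ {ω | X₁ ω * X₂ ω > x}).toReal = ∫ y, ν.real (Set.Ioi (x / y)) ∂μ :=
    fun x => by
      rw [← prod_tail_eq_integral hμpos, ← hprod,
        Measure.map_apply (by fun_prop) measurableSet_Ioi]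
      rfl
  obtain ⟨f, hfm, hf0, hfM, hfneg, hfeq, hfd⟩ :=
    exists_measurable_density hνpos h₁nonneg hM hx₀ h₁dens
  have hanti : Antitone fun z => ν.real (Set.Ioi z) := fun a b hab =>
    measureReal_mono (Set.Ioi_subset_Ioi hab)
  have hgT : Tendsto (fun x => x * f x / (L₁ * p₁ * x ^ p₁ * ν.real (Set.Ioi x))) atTop
      (nhds 1) := by
    refine h₁asym.congr' ?_
    filter_upwards [hfeq, eventually_gt_atTop 0] with x hx hx0
    rw [hx, Real.rpow_sub_one hx0.ne']
    field_simp
  have hgM : ∀ z, 0 < z → z * f z ≤ M * z := fun z hz => by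
    rw [mul_comm M]; exact mul_le_mul_of_nonneg_left (hfM z) hz.le
  obtain ⟨K, hK0, hK⟩ := exists_exp_bound_of_ratio (g := fun z => z * f z) (η := 1 / 2) hC₁ hL₁ hp₁
    (by norm_num) (by norm_num) hgM htail₁ hgT
  have hK' : ∀ z, 0 < z → z * f z ≤ K := fun z hz =>
    (hK z hz).trans (mul_le_of_le_one_right hK0.le (by
      rw [Real.exp_le_one_iff]
      have : 0 < (1 - 1 / 2) * L₁ * z ^ p₁ := by norm_num; positivity
      linarith))
  -- the usual `∫ y⁻¹ f (x / y) dμ(y)`, in a form that has the shape required by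
  -- `tendsto_integral_ratio` after multiplication by `x`
  refine ⟨fun x => x⁻¹ * ∫ y, (x / y) * f (x / y) ∂μ, fun x => ?_, ?_, ?_⟩
  · change 0 ≤ x⁻¹ * ∫ y, (x / y) * f (x / y) ∂μ
    rw [← integral_const_mul]
    refine integral_nonneg_of_ae ?_
    filter_upwards [hμpos] with y hy
    rcases le_or_gt x 0 with hx | hx
    · simp [hfneg _ (div_nonpos_of_nonpos_of_nonneg hx hy.le)]
    · have := hf0 (x / y)
      simp only [Pi.zero_apply]
      positivity
  · have : SFinite (volume.withDensity fun x => ENNReal.ofReal (f x)) := hfd ▸ inferInstance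
    rw [hprod, ← map_mul_prod_withDensity hfm hf0 hfneg hK' hμpos]
    simp only [← hfd]
  · have hlim := tendsto_integral_ratio (g := fun z => z * f z) hμpos hC₁ hC₂ hL₁ hL₂ hp₁ hp₂ hA
      hanti (fun z => measureReal_nonneg) (fun z => measureReal_le_one) (by fun_prop)
      (fun z hz => mul_nonneg hz.le (hf0 z)) hgM htail₁ htail₂ hgT
    refine hlim.congr' ?_
    filter_upwards [eventually_gt_atTop 0] with x hx
    rw [hT, Real.rpow_sub_one hx.ne']
    field_simp
end

section
/- Let Y be a real random variable such that P(Y > u) = (1 + o(1))·K·u^β·e^{−c·u} as u → ∞, for constants K, c > 0 and β ∈ ℝ, and suppose Y possesses a density h such that P(Y > u) = (1 + o(1))·h(u)/c as u → ∞. Define a_n = c^{−1}, b_n = c^{−1}·( ln n + β·ln(c^{−1}·ln n) + ln K ), and let ν_n be the law of X_n = (Y − b_n)/a_n. Then for all sufficiently large r > 0 and every p > 0, limsup_{n→∞} n·∫_{[−b_n/(2·a_n), −r]} e^{−x²/p} dν_n(x) < ∞. -/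
/-!
The proof rests on the tail bound `P(Y > u) ≤ 2 K u^β e^{-cu}` for large `u` and on the
fact that the law of `Y` has no atoms.

Put `ℓ = c⁻¹ log n`, so that `n K e^{-c b_n} = ℓ^{-β}`. For `t ∈ [-b_n/(2a_n), 0]` the event
`X_n ≥ t` is `Y ≥ u` with `u = b_n + t/c ∈ [b_n/2, b_n]`, and `b_n/ℓ → 1` forces
`u/ℓ ∈ [1/4, 4]` eventually. Hence `n P(X_n ≥ t) ≤ 2 (u/ℓ)^β e^{-t} ≤ 2 · 4^|β| · e^{-t}`
uniformly in `t` (`scaled_tail_bound`).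

On the other hand `e^{-x²/p} ≤ e^p e^{2x}`, and `e^{2x}` on `[L, 0]` is dominated by a sum over
`k` of `e^{-2k}` times indicators of `[max(-(k+1), L), ∞)`. A tail bound `A e^{-t}` therefore
bounds the integral by a geometric series, independently of the length of the interval
(`gaussian_integral_le_of_tail`).
-/

open MeasureTheory ProbabilityTheory Filter

/-- An exponential tail bound on `[L, 0]` bounds the Gaussian-weighted integral over `[L, -r]`
by a constant that does not depend on `L`. -/
lemma gaussian_integral_le_of_tail (ν : Measure ℝ) [IsProbabilityMeasure ν] (L A r p : ℝ)
    (hL : L ≤ 0) (hA : 0 ≤ A) (hr : 0 < r) (hp : 0 < p)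
    (htail : ∀ t, L ≤ t → t ≤ 0 → ν.real (Set.Ici t) ≤ A * Real.exp (-t)) :
    ∫ x in Set.Icc L (-r), Real.exp (-(x ^ 2) / p) ∂ν
      ≤ A * (Real.exp p * Real.exp 1 * (1 - Real.exp (-1))⁻¹) := by
  obtain ⟨N, hN⟩ := exists_nat_gt (-L)
  set t : ℕ → ℝ := fun k => max (-((k : ℝ) + 1)) L with ht
  set F : ℝ → ℝ := fun x => ∑ k ∈ Finset.range N,
    (Set.Ici (t k)).indicator (fun _ => Real.exp p * Real.exp (-2 * k)) x with hF
  have hterm : ∀ k : ℕ, Integrable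
      ((Set.Ici (t k)).indicator (fun _ => Real.exp p * Real.exp (-2 * k))) ν := fun k =>
    (integrable_const _).indicator measurableSet_Ici
  have hFint : Integrable F ν := integrable_finsetSum _ fun k _ => hterm k
  have hF0 : ∀ x, 0 ≤ F x := fun x =>
    Finset.sum_nonneg fun k _ => Set.indicator_nonneg (fun _ _ => by positivity) _
  have hgint : IntegrableOn (fun x => Real.exp (-(x ^ 2) / p)) (Set.Icc L (-r)) ν :=
    ContinuousOn.integrableOn_compact isCompact_Icc (by fun_prop)
  have hpt : ∀ x ∈ Set.Icc L (-r), Real.exp (-(x ^ 2) / p) ≤ F x := by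
    intro x hx
    have hx0 : 0 ≤ -x := by linarith [hx.2]
    -- the term with `k = ⌊-x⌋` already dominates the integrand
    have h1 := Nat.floor_le hx0
    have h2 := Nat.lt_floor_add_one (-x)
    have hkN : ⌊-x⌋₊ < N := by
      rw [Nat.floor_lt hx0]
      linarith [hx.1]
    have hmem : x ∈ Set.Ici (t ⌊-x⌋₊) := by
      simp only [ht, Set.mem_Ici, max_le_iff]
      exact ⟨by linarith, hx.1⟩
    have hle := Finset.single_le_sum (f := fun k : ℕ =>
        (Set.Ici (t k)).indicator (fun _ => Real.exp p * Real.exp (-2 * (k : ℝ))) x)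
      (fun k _ => Set.indicator_nonneg (fun _ _ => by positivity) _)
      (Finset.mem_range.mpr hkN)
    refine le_trans ?_ hle
    simp only [Set.indicator_of_mem hmem]
    rw [← Real.exp_add]
    apply Real.exp_le_exp.mpr
    have h3 : -(x ^ 2) / p ≤ p + 2 * x := by
      rw [div_le_iff₀ hp]
      nlinarith [sq_nonneg (x + p)]
    linarith
  calc ∫ x in Set.Icc L (-r), Real.exp (-(x ^ 2) / p) ∂ν
      ≤ ∫ x in Set.Icc L (-r), F x ∂ν :=
        setIntegral_mono_on hgint hFint.integrableOn measurableSet_Icc hpt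
    _ ≤ ∫ x, F x ∂ν := setIntegral_le_integral hFint (Eventually.of_forall hF0)
    _ = ∑ k ∈ Finset.range N, ν.real (Set.Ici (t k)) * (Real.exp p * Real.exp (-2 * k)) := by
        rw [hF, integral_finsetSum _ fun k _ => hterm k]
        refine Finset.sum_congr rfl fun k _ => ?_
        rw [integral_indicator_const _ measurableSet_Ici, smul_eq_mul]
    _ ≤ ∑ k ∈ Finset.range N, A * (Real.exp p * Real.exp 1) * Real.exp (-1) ^ k := by
        refine Finset.sum_le_sum fun k _ => ?_
        have hk : ν.real (Set.Ici (t k)) ≤ A * Real.exp ((k : ℝ) + 1) := by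
          refine (htail (t k) (le_max_right _ _) (max_le (by linarith [k.cast_nonneg (α := ℝ)]) hL)).trans ?_
          have : -((k : ℝ) + 1) ≤ t k := le_max_left _ _
          gcongr
          linarith
        calc _ ≤ A * Real.exp ((k : ℝ) + 1) * (Real.exp p * Real.exp (-2 * k)) := by gcongr
          _ = _ := by
            rw [← Real.exp_nat_mul, mul_assoc, mul_assoc, ← Real.exp_add, ← Real.exp_add,
              ← Real.exp_add, ← Real.exp_add]
            ring_nf
    _ ≤ A * (Real.exp p * Real.exp 1) * (1 - Real.exp (-1))⁻¹ := by
        rw [← Finset.mul_sum]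
        have h1 : Real.exp (-1) < 1 := by simp
        gcongr
        rw [← tsum_geometric_of_lt_one (Real.exp_pos _).le h1]
        exact (summable_geometric_of_lt_one (Real.exp_pos _).le h1).sum_le_tsum _
          fun k _ => by positivity
    _ = _ := by ring

/-- The centering `b_n`, as a function of `ℓ = c⁻¹ log n`, is asymptotic to `ℓ`. -/
lemma centering_div_tendsto_one (c β κ : ℝ) :
    Tendsto (fun l : ℝ => (l + c⁻¹ * (β * Real.log l + κ)) / l) atTop (nhds 1) := by
  have h1 : Tendsto (fun l : ℝ => Real.log l / l) atTop (nhds 0) :=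
    Real.isLittleO_log_id_atTop.tendsto_div_nhds_zero
  have h2 : Tendsto (fun l : ℝ => l⁻¹) atTop (nhds 0) := tendsto_inv_atTop_zero
  have h3 : Tendsto (fun l : ℝ => 1 + c⁻¹ * (β * (Real.log l / l) + κ * l⁻¹)) atTop
      (nhds (1 + c⁻¹ * (β * 0 + κ * 0))) :=
    (((h1.const_mul β).add (h2.const_mul κ)).const_mul c⁻¹).const_add 1
  simp only [mul_zero, add_zero] at h3
  refine h3.congr' ?_
  filter_upwards [eventually_gt_atTop 0] with l hl
  field_simp

lemma rpow_le_four_rpow_abs {x : ℝ} (h1 : 1 / 4 ≤ x) (h2 : x ≤ 4) (β : ℝ) :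
    x ^ β ≤ 4 ^ |β| := by
  have hx : 0 < x := by linarith
  rw [Real.rpow_def_of_pos hx, Real.rpow_def_of_pos (by norm_num)]
  apply Real.exp_le_exp.mpr
  have h3 : |Real.log x| ≤ Real.log 4 := by
    rw [abs_le]
    refine ⟨?_, Real.log_le_log hx h2⟩
    have := Real.log_le_log (by norm_num) h1
    rwa [one_div, Real.log_inv] at this
  calc Real.log x * β ≤ |Real.log x * β| := le_abs_self _
    _ = |Real.log x| * |β| := abs_mul _ _
    _ ≤ _ := by gcongr

/-- Uniform tail bound for the rescaled variable, in terms of `G u = P(Y > u)`: with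
`u = b_n + t/c`, the value `n G(u)` is at most a constant times `e^{-t}` for all
`u ∈ [b_n/2, b_n]`. -/
lemma scaled_tail_bound (G : ℝ → ℝ) (K c β : ℝ) (hK : 0 < K) (hc : 0 < c)
    (htail : Tendsto (fun u : ℝ => G u / (K * u ^ β * Real.exp (-(c * u)))) atTop (nhds 1))
    (b : ℕ → ℝ)
    (hb : ∀ n : ℕ, b n = c⁻¹ * (Real.log n + β * Real.log (c⁻¹ * Real.log n) + Real.log K)) :
    ∀ᶠ n : ℕ in atTop, 0 < b n ∧ ∀ t : ℝ, -(c * b n) / 2 ≤ t → t ≤ 0 →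
      n * G (b n + t / c) ≤ 2 * 4 ^ |β| * Real.exp (-t) := by
  have hl : Tendsto (fun n : ℕ => c⁻¹ * Real.log n) atTop atTop :=
    (Real.tendsto_log_atTop.comp tendsto_natCast_atTop_atTop).const_mul_atTop (inv_pos.mpr hc)
  have hratio := (centering_div_tendsto_one c β (Real.log K)).comp hl
  have hG : ∀ᶠ u in atTop, G u ≤ 2 * (K * u ^ β * Real.exp (-(c * u))) := by
    filter_upwards [htail.eventually (gt_mem_nhds (show (1 : ℝ) < 2 by norm_num)),
      eventually_gt_atTop 0] with u hu hu0
    have : 0 < K * u ^ β * Real.exp (-(c * u)) := by positivity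
    exact ((div_lt_iff₀ this).mp hu).le
  obtain ⟨u₀, hu₀⟩ := eventually_atTop.mp hG
  filter_upwards [hl.eventually_gt_atTop 0, hl.eventually_ge_atTop (4 * u₀),
    hratio.eventually (lt_mem_nhds (show (1 / 2 : ℝ) < 1 by norm_num)),
    hratio.eventually (gt_mem_nhds (show (1 : ℝ) < 2 by norm_num)),
    eventually_gt_atTop 0] with n hl0 hlu hlo hhi hn
  have hn' : (0 : ℝ) < n := by exact_mod_cast hn
  simp only [Function.comp_apply] at hlo hhi
  have hbn : c⁻¹ * Real.log n + c⁻¹ * (β * Real.log (c⁻¹ * Real.log n) + Real.log K) = b n := by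
    rw [hb]; ring
  have hbc : c * b n = Real.log n + β * Real.log (c⁻¹ * Real.log n) + Real.log K := by
    rw [hb]; field_simp
  rw [hbn] at hlo hhi
  set l := c⁻¹ * Real.log n with hldef
  rw [lt_div_iff₀ hl0] at hlo
  rw [div_lt_iff₀ hl0] at hhi
  refine ⟨by linarith, fun t ht1 ht0 => ?_⟩
  have hu1 : b n / 2 ≤ b n + t / c := by
    have : -(b n) / 2 ≤ t / c := by
      rw [le_div_iff₀ hc]
      linarith
    linarith
  have hu2 : b n + t / c ≤ b n := by
    have : t / c ≤ 0 := div_nonpos_of_nonpos_of_nonneg ht0 hc.le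
    linarith
  set u := b n + t / c with hu
  have hu0 : 0 < u := by linarith
  have hcu : c * u = c * b n + t := by rw [hu]; field_simp
  have hexp : n * (K * Real.exp (-(c * u))) = (l ^ β)⁻¹ * Real.exp (-t) := by
    rw [hcu, hbc, Real.rpow_def_of_pos hl0, ← Real.exp_neg]
    nth_rewrite 1 [← Real.exp_log hn']
    nth_rewrite 1 [← Real.exp_log hK]
    rw [← Real.exp_add, ← Real.exp_add, ← Real.exp_add]
    ring_nf
  calc n * G u ≤ n * (2 * (K * u ^ β * Real.exp (-(c * u)))) := by
        gcongr
        exact hu₀ u (by linarith)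
    _ = 2 * u ^ β * (n * (K * Real.exp (-(c * u)))) := by ring
    _ = 2 * (u / l) ^ β * Real.exp (-t) := by
        rw [hexp, Real.div_rpow hu0.le hl0.le]
        ring
    _ ≤ 2 * 4 ^ |β| * Real.exp (-t) := by
        gcongr
        apply rpow_le_four_rpow_abs
        · rw [le_div_iff₀ hl0]; linarith
        · rw [div_le_iff₀ hl0]; linarith


/-- condition (conditionKK).  If `P(Y > u) = (1+o(1)) K u^β e^{-cu}`
and `Y` has a density `h` with `P(Y > u) = (1+o(1)) h(u)/c`, then for all sufficiently
large `r > 0` and every `p > 0` the sequence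
`n ↦ n ∫_{[-b_n/(2a_n), -r]} e^{-x²/p} dν_n(x)` has finite limsup (is eventually bounded
above), where `ν_n` is the law of `(Y - b_n)/a_n`. -/
theorem conditionKK_from_density
    {Ω : Type*} [MeasureSpace Ω] [IsProbabilityMeasure (ℙ : Measure Ω)]
    (Y : Ω → ℝ) (hY : Measurable Y)
    (K c β : ℝ) (hK : 0 < K) (hc : 0 < c)
    (htail : Tendsto (fun u : ℝ =>
        (ℙ {ω | Y ω > u}).toReal / (K * u ^ β * Real.exp (-(c * u))))
      atTop (nhds 1))
    (h : ℝ → ℝ) (hnonneg : ∀ x, 0 ≤ h x)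
    (hdens : Measure.map Y ℙ
      = MeasureTheory.volume.withDensity (fun x => ENNReal.ofReal (h x)))
    (hasym : Tendsto (fun u : ℝ => (ℙ {ω | Y ω > u}).toReal / (h u / c))
      atTop (nhds 1))
    (a b : ℕ → ℝ)
    (ha : ∀ n : ℕ, a n = c⁻¹)
    (hb : ∀ n : ℕ, b n = c⁻¹ * (Real.log n + β * Real.log (c⁻¹ * Real.log n) + Real.log K)) :
    ∃ R : ℝ, 0 < R ∧ ∀ r : ℝ, R < r → ∀ p : ℝ, 0 < p →
      IsBoundedUnder (· ≤ ·) atTop (fun n : ℕ =>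
        (n : ℝ) * ∫ x in Set.Icc (-(b n) / (2 * a n)) (-r),
          Real.exp (-(x ^ 2) / p) ∂(Measure.map (fun ω => (Y ω - b n) / a n) ℙ)) := by
  have hmap : ∀ u : ℝ, (ℙ {ω | Y ω ≥ u}).toReal = (ℙ {ω | Y ω > u}).toReal := by
    intro u
    have h1 : Measure.map Y ℙ (Set.Ici u) = Measure.map Y ℙ (Set.Ioi u) := by
      refine measure_congr ?_
      rw [hdens]
      exact (withDensity_absolutelyContinuous _ _).ae_le Ioi_ae_eq_Ici.symm
    rw [Measure.map_apply hY measurableSet_Ici, Measure.map_apply hY measurableSet_Ioi] at h1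
    exact congrArg ENNReal.toReal h1
  refine ⟨1, one_pos, fun r hr p hp => ?_⟩
  refine ⟨2 * 4 ^ |β| * (Real.exp p * Real.exp 1 * (1 - Real.exp (-1))⁻¹), ?_⟩
  rw [eventually_map]
  filter_upwards [scaled_tail_bound _ K c β hK hc htail b hb, eventually_gt_atTop 0]
    with n ⟨hbn, hn⟩ hn0
  have hn' : (0 : ℝ) < n := by exact_mod_cast hn0
  have hX : Measurable (fun ω => (Y ω - b n) / a n) := by fun_prop
  have : IsProbabilityMeasure (Measure.map (fun ω => (Y ω - b n) / a n) ℙ) :=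
    Measure.isProbabilityMeasure_map hX.aemeasurable
  have hLeq : -(b n) / (2 * a n) = -(c * b n) / 2 := by
    rw [ha]; field_simp
  have key := gaussian_integral_le_of_tail (Measure.map (fun ω => (Y ω - b n) / a n) ℙ)
    (-(b n) / (2 * a n)) (2 * 4 ^ |β| / n) r p
    (by rw [hLeq]; nlinarith [mul_pos hc hbn]) (by positivity) (by linarith) hp ?_
  · calc _ ≤ (n : ℝ) * _ := mul_le_mul_of_nonneg_left key hn'.le
      _ = _ := by field_simp
  · intro t ht1 ht0
    rw [hLeq] at ht1
    have h2 := hn t ht1 ht0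
    rw [← hmap] at h2
    have hset : (fun ω => (Y ω - b n) / a n) ⁻¹' Set.Ici t = {ω | Y ω ≥ b n + t / c} := by
      ext ω
      have e1 : (Y ω - b n) / a n = (Y ω - b n) * c := by rw [ha]; field_simp
      simp only [Set.mem_preimage, Set.mem_Ici, Set.mem_ofPred_eq, ge_iff_le, e1]
      rw [← div_le_iff₀ hc]
      constructor <;> intro _ <;> linarith
    rw [Measure.real, Measure.map_apply hX measurableSet_Ici, hset, div_mul_eq_mul_div,
      le_div_iff₀ hn']
    linarith
end
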